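/- There exist a positive constant C and a time T > 0 such that for all t ≥ T and all x in the set of time-delayed hot spots ℋ(t) = {x ∈ ℝⁿ : u(x,t) = max_{ξ∈ℝⁿ} u(ξ,t)}, one has |x − m_h| ≤ C/t; that is, sup{|x − m_h| : x ∈ ℋ(t)} = O(1/t) as t → ∞. -/

import Mathlib

open Real Set Filter MeasureTheory Metric Pointwise
open scoped Nat Topology

noncomputable section

variable {n : ℕ}

/-- The Laplacian of `v : ℝⁿ → ℝ` at `x`, as the sum of second partial derivatives. -/
def lap (v : EuclideanSpace ℝ (Fin n) → ℝ) (x : EuclideanSpace ℝ (Fin n)) : ℝ :=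
  ∑ i : Fin n, iteratedDeriv 2 (fun a : ℝ => v (x + a • EuclideanSpace.single i (1 : ℝ))) 0

/-- `CS(φ)`: the convex hull of the support of `φ`. -/
def CS (v : EuclideanSpace ℝ (Fin n) → ℝ) : Set (EuclideanSpace ℝ (Fin n)) :=
  convexHull ℝ (tsupport v)

/-- `d_φ`: the diameter of the support of `φ`. -/
def dsupp (v : EuclideanSpace ℝ (Fin n) → ℝ) : ℝ := Metric.diam (tsupport v)

/-- `δ(K,L) = sup_{η ∈ L} dist(η, K)`. -/
def deltaCC (K L : Set (EuclideanSpace ℝ (Fin n))) : ℝ :=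
  sSup ((fun η => Metric.infDist η K) '' L)

/-- The centroid `m_h = (∫ h(y) y dy)/(∫ h(y) dy)`. -/
def centroid (h : EuclideanSpace ℝ (Fin n) → ℝ) : EuclideanSpace ℝ (Fin n) :=
  (∫ y, h y)⁻¹ • ∫ y, h y • y

/-- `T₀(φ) = min{T ≥ 0 : ∀ t ≥ T, t ≥ φ(t) + max{d_h, δ(CS(h),CS(f)) + d_f}}`, `h = f + g`. -/
def T0 (f g : EuclideanSpace ℝ (Fin n) → ℝ) (phi : ℝ → ℝ) : ℝ :=
  sInf {T : ℝ | 0 ≤ T ∧ ∀ t ≥ T,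
    phi t + max (dsupp (f + g)) (deltaCC (CS (f + g)) (CS f) + dsupp f) ≤ t}

/-- Sobolev `W^{ℓ,∞}`-type norm: sum of sup-norms of the iterated derivatives up to order `ℓ`. -/
def sobNorm (ℓ : ℕ) (v : EuclideanSpace ℝ (Fin n) → ℝ) : ℝ :=
  ∑ i ∈ Finset.range (ℓ + 1), ⨆ x, ‖iteratedFDeriv ℝ i v x‖

/-- The `L¹` norm. -/
def L1norm (v : EuclideanSpace ℝ (Fin n) → ℝ) : ℝ := ∫ y, |v y|

/-- The sup norm. -/
def LinfNorm (v : EuclideanSpace ℝ (Fin n) → ℝ) : ℝ := ⨆ x, |v x|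

/-- `𝒞(v)`: the critical points of `v` lying in the interior of its support. -/
def critSet (v : EuclideanSpace ℝ (Fin n) → ℝ) : Set (EuclideanSpace ℝ (Fin n)) :=
  {x | x ∈ interior (tsupport v) ∧ gradient v x = 0}

/-!
At each frequency `ξ` the Fourier transform of a solution is a damped oscillator
`w'' + w' + ρ w = 0` with `ρ = 4π²|ξ|²`. Modes with `ρ` bounded below decay exponentially, while
for small `ρ` the slow root `≈ -ρ` leads to a multiple of `e^{-ρt}` whose coefficient is `ĥ(ξ)` up
to a correction of size `ρ |f̂(ξ)|`, where `h = f + g`. After translating the centroid of `h` to the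
origin, `Im ĥ` vanishes to third order at `ξ = 0`, and so does `ρ |Im f̂|`.

If `u(0, t) ≤ u(x, t)`, Fourier inversion bounds the integral of `(1 - cos 2π⟨ξ, x⟩) Re û(ξ, t)` by
that of `|sin 2π⟨ξ, x⟩| |Im û(ξ, t)|`. The first is at least a constant times
`(1 - e^{-|x|²/8t}) G(t)`, with `G(t)` the integral of a Gaussian of variance `~ 1/t`, and the
second is at most a constant times `|x| G(t) / t²`. Finite propagation speed gives `|x| ≤ R + t`,
which excludes distant solutions of the resulting inequality `1 - e^{-|x|²/8t} ≲ |x| / t²`, so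
`|x| ≲ 1/t`.
-/

open InnerProductSpace
open scoped Gradient FourierTransform Laplacian

section SpaceTime

variable {E : Type*} [NormedAddCommGroup E]

/-- The time derivative of a function on the half-space `t ≥ 0`, one-sided at `t = 0`. -/
def timeDeriv [NormedSpace ℝ E] (U : E × ℝ → ℝ) (p : E × ℝ) : ℝ :=
  derivWithin (fun s => U (p.1, s)) (Ici 0) p.2

/-- The gradient in the space variable of a function on space-time. -/
def spaceGrad [InnerProductSpace ℝ E] [CompleteSpace E] (U : E × ℝ → ℝ) (p : E × ℝ) : E :=
  ∇ (fun y => U (y, p.2)) p.1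

section Time

variable [NormedSpace ℝ E] {U : E × ℝ → ℝ} {k m : WithTop ℕ∞} {x : E} {t : ℝ}

theorem contDiff_slice (hU : ContDiffOn ℝ k U (univ ×ˢ Ici 0)) (ht : 0 ≤ t) :
    ContDiff ℝ k (fun x => U (x, t)) :=
  contDiffOn_univ.1 <| hU.comp (f := fun x : E => (x, t)) (by fun_prop) fun _ _ => ⟨trivial, ht⟩

theorem timeDeriv_eq_fderivWithin (hU : DifferentiableOn ℝ U (univ ×ˢ Ici 0)) {p : E × ℝ}
    (hp : 0 ≤ p.2) : timeDeriv U p = fderivWithin ℝ U (univ ×ˢ Ici 0) p (0, 1) := by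
  have hline : HasDerivWithinAt (fun s : ℝ => (p.1, s)) (0, 1) (Ici 0) p.2 :=
    ((hasDerivAt_const p.2 p.1).prodMk (hasDerivAt_id p.2)).hasDerivWithinAt
  have hUp := (hU p ⟨trivial, hp⟩).hasFDerivWithinAt
  exact (hUp.comp_hasDerivWithinAt p.2 hline fun _ hs => mk_mem_prod (mem_univ p.1) hs).derivWithin
    (uniqueDiffOn_Ici 0 p.2 hp)

theorem contDiffOn_timeDeriv (hU : ContDiffOn ℝ k U (univ ×ˢ Ici 0)) (hm : m + 1 ≤ k) :
    ContDiffOn ℝ m (timeDeriv U) (univ ×ˢ Ici 0) :=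
  ((hU.fderivWithin (uniqueDiffOn_univ.prod (uniqueDiffOn_Ici 0)) hm).clm_apply
    contDiffOn_const).congr fun _ hp =>
      timeDeriv_eq_fderivWithin ((hU.of_le (le_add_self.trans hm)).differentiableOn_one) hp.2

theorem hasDerivWithinAt_timeDeriv (hU : DifferentiableOn ℝ U (univ ×ˢ Ici 0)) (ht : 0 ≤ t) :
    HasDerivWithinAt (fun s => U (x, s)) (timeDeriv U (x, t)) (Ici 0) t :=
  ((hU (x, t) ⟨trivial, ht⟩).comp t (f := fun s : ℝ => (x, s)) (by fun_prop)
    fun s hs => ⟨trivial, hs⟩).hasDerivWithinAt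

theorem hasDerivAt_timeDeriv (hU : DifferentiableOn ℝ U (univ ×ˢ Ici 0)) (ht : 0 < t) :
    HasDerivAt (fun s => U (x, s)) (timeDeriv U (x, t)) t :=
  (hasDerivWithinAt_timeDeriv hU ht.le).hasDerivAt (Ici_mem_nhds ht)

theorem hasFDerivAt_fderiv (hU : ContDiffOn ℝ 2 U (univ ×ˢ Ici 0)) (ht : 0 < t) :
    HasFDerivAt (fderiv ℝ U) (fderiv ℝ (fderiv ℝ U) (x, t)) (x, t) :=
  (((hU.contDiffAt (prod_mem_nhds univ_mem (Ici_mem_nhds ht))).fderiv_right (m := 1)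
    le_rfl).differentiableAt one_ne_zero).hasFDerivAt

end Time

variable [InnerProductSpace ℝ E] [CompleteSpace E] {U : E × ℝ → ℝ} {k m : WithTop ℕ∞} {x : E}
  {t : ℝ}

theorem spaceGrad_eq_fderivWithin (hU : DifferentiableOn ℝ U (univ ×ˢ Ici 0)) {p : E × ℝ}
    (hp : 0 ≤ p.2) : spaceGrad U p =
      (toDual ℝ E).symm ((fderivWithin ℝ U (univ ×ˢ Ici 0) p).comp (.inl ℝ E ℝ)) := by
  have hline : HasFDerivWithinAt (fun y : E => (y, p.2)) (.inl ℝ E ℝ) univ p.1 :=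
    (hasFDerivAt_prodMk_left p.1 p.2).hasFDerivWithinAt
  have hUp := (hU p ⟨trivial, hp⟩).hasFDerivWithinAt
  have hcomp := (hUp.comp p.1 hline fun y _ => mk_mem_prod (mem_univ y) hp).hasFDerivAt_of_univ
  rw [spaceGrad, gradient, ← hcomp.fderiv]
  rfl

theorem contDiffOn_spaceGrad (hU : ContDiffOn ℝ k U (univ ×ˢ Ici 0)) (hm : m + 1 ≤ k) :
    ContDiffOn ℝ m (spaceGrad U) (univ ×ˢ Ici 0) :=
  ((toDual ℝ E).symm.contDiff.comp_contDiffOn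
    ((hU.fderivWithin (uniqueDiffOn_univ.prod (uniqueDiffOn_Ici 0)) hm).clm_comp
      contDiffOn_const)).congr fun _ hp =>
      spaceGrad_eq_fderivWithin ((hU.of_le (le_add_self.trans hm)).differentiableOn_one) hp.2

theorem spaceGrad_timeDeriv (hU : ContDiffOn ℝ 2 U (univ ×ˢ Ici 0)) (ht : 0 < t) :
    spaceGrad (timeDeriv U) (x, t) =
      (toDual ℝ E).symm ((fderiv ℝ (fderiv ℝ U) (x, t) (0, 1)).comp (.inl ℝ E ℝ)) := by
  have hUt : ContDiffAt ℝ 2 U (x, t) := hU.contDiffAt (prod_mem_nhds univ_mem (Ici_mem_nhds ht))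
  have htime : (fun y => timeDeriv U (y, t)) = fun y => fderiv ℝ U (y, t) (0, 1) := by
    funext y
    rw [timeDeriv_eq_fderivWithin (hU.differentiableOn two_ne_zero) (p := (y, t)) ht.le,
      fderivWithin_of_mem_nhds (prod_mem_nhds univ_mem (Ici_mem_nhds ht))]
  have hslice : HasFDerivAt (fun y => fderiv ℝ U (y, t))
      ((fderiv ℝ (fderiv ℝ U) (x, t)).comp (.inl ℝ E ℝ)) x :=
    HasFDerivAt.comp (g := fderiv ℝ U) x (hasFDerivAt_fderiv hU ht)
      (hasFDerivAt_prodMk_left (𝕜 := ℝ) x t)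
  rw [spaceGrad, gradient, htime,
    (hslice.clm_apply (hasFDerivAt_const ((0, 1) : E × ℝ) x)).fderiv]
  congr 1
  ext v
  simpa using (hUt.isSymmSndFDerivAt (by simp)).eq (v, 0) (0, 1)

theorem hasDerivAt_spaceGrad (hU : ContDiffOn ℝ 2 U (univ ×ˢ Ici 0)) (ht : 0 < t) :
    HasDerivAt (fun s => spaceGrad U (x, s)) (spaceGrad (timeDeriv U) (x, t)) t := by
  have hgrad : (fun s => spaceGrad U (x, s)) =ᶠ[𝓝 t]
      fun s => (toDual ℝ E).symm ((fderiv ℝ U (x, s)).comp (.inl ℝ E ℝ)) := by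
    filter_upwards [Ioi_mem_nhds ht] with s hs
    rw [spaceGrad_eq_fderivWithin (hU.differentiableOn two_ne_zero) (p := (x, s)) (le_of_lt hs),
      fderivWithin_of_mem_nhds (prod_mem_nhds univ_mem (Ici_mem_nhds hs))]
  have hline : HasDerivAt (fun s => fderiv ℝ U (x, s)) (fderiv ℝ (fderiv ℝ U) (x, t) (0, 1)) t :=
    HasFDerivAt.comp_hasDerivAt (l := fderiv ℝ U) (f := fun s : ℝ => (x, s)) t
      (hasFDerivAt_fderiv hU ht) ((hasDerivAt_const t x).prodMk (hasDerivAt_id t))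
  rw [spaceGrad_timeDeriv hU ht]
  refine HasDerivAt.congr_of_eventuallyEq ?_ hgrad
  have hcomp := (toDual ℝ E).symm.toContinuousLinearEquiv.hasFDerivAt.comp_hasDerivAt t
    (hline.clm_comp (hasDerivAt_const t (.inl ℝ E ℝ)))
  simpa [Function.comp_def] using hcomp

end SpaceTime

section ParametricIntegral

variable {X V : Type*} [TopologicalSpace X] [T2Space X] [SecondCountableTopology X]
  [MeasurableSpace X] [BorelSpace X] {μ : Measure X} [IsFiniteMeasureOnCompacts μ]
  [NormedAddCommGroup V] [NormedSpace ℝ V] {F F' : X × ℝ → V} {K : Set X} {I : Set ℝ} {t : ℝ}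

theorem hasDerivAt_integral_of_compact_support (hI : IsOpen I) (hK : IsCompact K)
    (hF : ContinuousOn F (univ ×ˢ I)) (hF' : ContinuousOn F' (univ ×ˢ I))
    (hderiv : ∀ x, ∀ s ∈ I, HasDerivAt (fun s => F (x, s)) (F' (x, s)) s)
    (hzero : ∀ x ∉ K, ∀ s ∈ I, F (x, s) = 0) (ht : t ∈ I) :
    Integrable (fun x => F' (x, t)) μ ∧
      HasDerivAt (fun s => ∫ x, F (x, s) ∂μ) (∫ x, F' (x, t) ∂μ) t := by
  obtain ⟨ε, hε, hεI⟩ := Metric.nhds_basis_closedBall.mem_iff.1 (hI.mem_nhds ht)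
  obtain ⟨C, hC⟩ : ∃ C, ∀ p ∈ K ×ˢ closedBall t ε, ‖F' p‖ ≤ C :=
    (hK.prod (isCompact_closedBall t ε)).exists_bound_of_continuousOn
      (hF'.mono fun p hp => ⟨trivial, hεI hp.2⟩)
  have hslice {G : X × ℝ → V} (hG : ContinuousOn G (univ ×ˢ I)) {s : ℝ} (hs : s ∈ I) :
      Continuous fun x => G (x, s) :=
    continuousOn_univ.1 <| hG.comp (f := fun x : X => (x, s)) (by fun_prop) fun _ _ => ⟨trivial, hs⟩
  have hzero' : ∀ x ∉ K, ∀ s ∈ I, F' (x, s) = 0 := fun x hx s hs =>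
    (hderiv x s hs).unique <| (hasDerivAt_const s (0 : V)).congr_of_eventuallyEq <| by
      filter_upwards [hI.mem_nhds hs] with r hr using hzero x hx r hr
  refine hasDerivAt_integral_of_dominated_loc_of_deriv_le (F := fun s x => F (x, s))
    (F' := fun s x => F' (x, s)) (bound := K.indicator fun _ => C) (closedBall_mem_nhds t hε)
    ?_ ?_ (hslice hF' ht).aestronglyMeasurable ?_ ?_ ?_
  · filter_upwards [hI.mem_nhds ht] with s hs using (hslice hF hs).aestronglyMeasurable
  · exact (hslice hF ht).integrable_of_hasCompactSupport
      (.intro hK fun x hx => hzero x hx t ht)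
  · refine .of_forall fun x s hs => ?_
    by_cases hx : x ∈ K
    · simpa only [indicator_of_mem hx] using hC (x, s) ⟨hx, hs⟩
    · simp only [indicator_of_notMem hx, hzero' x hx s (hεI hs), norm_zero, le_refl]
  · exact (integrable_indicator_iff hK.measurableSet).2 (integrableOn_const hK.measure_ne_top)
  · exact .of_forall fun x s hs => hderiv x s (hεI hs)

end ParametricIntegral

section Green

variable {E : Type*} [NormedAddCommGroup E] [InnerProductSpace ℝ E] {ψ v : E → ℝ}

theorem hasFDerivAt_fderiv_apply (hv : ContDiff ℝ 2 v) (x y : E) :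
    HasFDerivAt (fun z => fderiv ℝ v z y) ((fderiv ℝ (fderiv ℝ v) x).flip y) x := by
  have hd : HasFDerivAt (fderiv ℝ v) (fderiv ℝ (fderiv ℝ v) x) x :=
    ((hv.fderiv_right (m := 1) le_rfl).differentiable one_ne_zero x).hasFDerivAt
  simpa using hd.clm_apply (hasFDerivAt_const y x)

variable [FiniteDimensional ℝ E]

theorem laplacian_eq_sum_fderiv_fderiv {ι : Type*} [Fintype ι] (hv : ContDiff ℝ 2 v)
    (b : OrthonormalBasis ι ℝ E) (x : E) :
    Δ v x = ∑ i, fderiv ℝ (fun z => fderiv ℝ v z (b i)) x (b i) := by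
  rw [laplacian_eq_iteratedFDeriv_orthonormalBasis v b]
  refine Finset.sum_congr rfl fun i _ => ?_
  rw [iteratedFDeriv_two_apply, (hasFDerivAt_fderiv_apply hv x (b i)).fderiv]
  rfl

theorem continuous_laplacian (hv : ContDiff ℝ 2 v) : Continuous (Δ v) := by
  have hv' (y : E) : ContDiff ℝ 1 fun z => fderiv ℝ v z y :=
    (hv.fderiv_right le_rfl).clm_apply contDiff_const
  simp only [funext (laplacian_eq_sum_fderiv_fderiv hv (stdOrthonormalBasis ℝ E))]
  exact continuous_finsetSum _ fun i _ =>
    ((hv' _).continuous_fderiv one_ne_zero).clm_apply continuous_const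

theorem continuous_gradient (hv : ContDiff ℝ 1 v) : Continuous (∇ v) :=
  (toDual ℝ E).symm.continuous.comp (hv.continuous_fderiv one_ne_zero)

theorem integral_mul_laplacian_add_inner_gradient [MeasurableSpace E] [BorelSpace E]
    (hψ : ContDiff ℝ 1 ψ) (hψc : HasCompactSupport ψ) (hv : ContDiff ℝ 2 v) :
    ∫ x, (ψ x * Δ v x + ⟪∇ ψ x, ∇ v x⟫_ℝ) = 0 := by
  set b := stdOrthonormalBasis ℝ E
  have hvb (i) : ContDiff ℝ 1 fun z => fderiv ℝ v z (b i) :=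
    (hv.fderiv_right le_rfl).clm_apply contDiff_const
  have hfderiv {a : E → ℝ} (ha : ContDiff ℝ 1 a) (y : E) : Continuous fun x => fderiv ℝ a x y :=
    (ha.continuous_fderiv one_ne_zero).clm_apply continuous_const
  have hint₁ (i) : Integrable fun x => ψ x * fderiv ℝ (fun z => fderiv ℝ v z (b i)) x (b i) :=
    (hψ.continuous.mul (hfderiv (hvb i) _)).integrable_of_hasCompactSupport hψc.mul_right
  have hint₂ (i) : Integrable fun x => fderiv ℝ ψ x (b i) * fderiv ℝ v x (b i) :=
    ((hfderiv hψ _).mul (hvb i).continuous).integrable_of_hasCompactSupport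
      (hψc.fderiv_apply ℝ (b i)).mul_right
  have hparts (i) := integral_mul_fderiv_eq_neg_fderiv_mul_of_integrable (hint₂ i) (hint₁ i)
    ((hψ.continuous.mul (hvb i).continuous).integrable_of_hasCompactSupport hψc.mul_right)
    (fun x _ => hψ.differentiable one_ne_zero x)
    (fun x _ => (hvb i).differentiable one_ne_zero x)
  have hinner (x : E) : ⟪∇ ψ x, ∇ v x⟫_ℝ = ∑ i, fderiv ℝ ψ x (b i) * fderiv ℝ v x (b i) := by
    rw [← b.sum_inner_mul_inner]
    simp only [inner_gradient_left, inner_gradient_right, conj_trivial]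
  calc ∫ x, (ψ x * Δ v x + ⟪∇ ψ x, ∇ v x⟫_ℝ)
      = ∫ x, ∑ i, (ψ x * fderiv ℝ (fun z => fderiv ℝ v z (b i)) x (b i)
          + fderiv ℝ ψ x (b i) * fderiv ℝ v x (b i)) := by
        simp only [laplacian_eq_sum_fderiv_fderiv hv b, hinner, Finset.mul_sum,
          Finset.sum_add_distrib]
    _ = ∑ i, ∫ x, (ψ x * fderiv ℝ (fun z => fderiv ℝ v z (b i)) x (b i)
          + fderiv ℝ ψ x (b i) * fderiv ℝ v x (b i)) :=
        integral_finsetSum _ fun i _ => (hint₁ i).add (hint₂ i)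
    _ = 0 := Finset.sum_eq_zero fun i _ => by
        rw [integral_add (hint₁ i) (hint₂ i), hparts i, neg_add_cancel]

end Green

section FinitePropagation

variable {E : Type*} [NormedAddCommGroup E] {U : E × ℝ → ℝ} {f g : E → ℝ}
  {x x₀ : E} {r R t : ℝ}

/-- A smooth cutoff which, at each time `0 ≤ t ≤ r`, is supported in the ball of radius `r - t`
about `x₀`. -/
def coneCutoff (x₀ : E) (r : ℝ) (p : E × ℝ) : ℝ :=
  expNegInvGlue ((r - p.2) ^ 2 - ‖p.1 - x₀‖ ^ 2)

theorem hasDerivAt_expNegInvGlue (s : ℝ) :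
    HasDerivAt expNegInvGlue (deriv expNegInvGlue s) s :=
  ((expNegInvGlue.contDiff (n := 1)).differentiable one_ne_zero s).hasDerivAt

theorem deriv_expNegInvGlue_eq_zero {s : ℝ} (hs : s ≤ 0) : deriv expNegInvGlue s = 0 :=
  IsLocalMin.deriv_eq_zero <| .of_forall fun y => by
    rw [expNegInvGlue.zero_of_nonpos hs]
    exact expNegInvGlue.nonneg y

theorem coneCutoff_nonneg (p : E × ℝ) : 0 ≤ coneCutoff x₀ r p := expNegInvGlue.nonneg _

theorem coneCutoff_eq_zero (ht : t ≤ r) (hx : r - t ≤ ‖x - x₀‖) : coneCutoff x₀ r (x, t) = 0 :=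
  expNegInvGlue.zero_of_nonpos <| sub_nonpos.2 <| pow_le_pow_left₀ (sub_nonneg.2 ht) hx 2

theorem coneCutoff_apex_pos (ht : t < r) : 0 < coneCutoff x₀ r (x₀, t) := by
  refine expNegInvGlue.pos_of_pos ?_
  simpa using pow_pos (sub_pos.2 ht) 2

theorem hasDerivAt_coneCutoff :
    HasDerivAt (fun s => coneCutoff x₀ r (x, s))
      (-(2 * (r - t) * deriv expNegInvGlue ((r - t) ^ 2 - ‖x - x₀‖ ^ 2))) t := by
  have hphase : HasDerivAt (fun s => (r - s) ^ 2 - ‖x - x₀‖ ^ 2) (-(2 * (r - t))) t := by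
    simpa using (((hasDerivAt_id t).const_sub r).pow 2).sub_const (‖x - x₀‖ ^ 2)
  exact ((hasDerivAt_expNegInvGlue _).comp t hphase).congr_deriv (by ring)

variable [InnerProductSpace ℝ E]

theorem contDiff_coneCutoff : ContDiff ℝ 1 (coneCutoff x₀ r) :=
  expNegInvGlue.contDiff.comp (((contDiff_const.sub contDiff_snd).pow 2).sub
    ((contDiff_fst.sub contDiff_const).norm_sq ℝ))

theorem inner_gradient_coneCutoff [CompleteSpace E] (w : E) :
    ⟪∇ (fun y => coneCutoff x₀ r (y, t)) x, w⟫_ℝ =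
      -(2 * deriv expNegInvGlue ((r - t) ^ 2 - ‖x - x₀‖ ^ 2) * ⟪x - x₀, w⟫_ℝ) := by
  have hphase : HasFDerivAt (fun y => (r - t) ^ 2 - ‖y - x₀‖ ^ 2)
      (-(2 • innerSL ℝ (x - x₀) : E →L[ℝ] ℝ)) x := by
    simpa using (((hasFDerivAt_id x).sub_const x₀).norm_sq).const_sub ((r - t) ^ 2)
  have hcut : HasFDerivAt (fun y => coneCutoff x₀ r (y, t))
      (deriv expNegInvGlue ((r - t) ^ 2 - ‖x - x₀‖ ^ 2) •
        -(2 • innerSL ℝ (x - x₀) : E →L[ℝ] ℝ)) x :=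
    (hasDerivAt_expNegInvGlue _).comp_hasFDerivAt x hphase
  rw [inner_gradient_left, hcut.fderiv]
  simp only [smul_apply, neg_apply, innerSL_apply_apply, nsmul_eq_mul, Nat.cast_ofNat, smul_eq_mul]
  ring

theorem two_mul_inner_le_of_mem_cone {w : E} {a : ℝ} (ht : t ≤ r) :
    2 * a * deriv expNegInvGlue ((r - t) ^ 2 - ‖x - x₀‖ ^ 2) * ⟪x - x₀, w⟫_ℝ ≤
      (r - t) * deriv expNegInvGlue ((r - t) ^ 2 - ‖x - x₀‖ ^ 2) * (a ^ 2 + ‖w‖ ^ 2) := by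
  set k := deriv expNegInvGlue ((r - t) ^ 2 - ‖x - x₀‖ ^ 2)
  have hk0 : 0 ≤ k := expNegInvGlue.monotone.deriv_nonneg
  rcases le_total (r - t) ‖x - x₀‖ with hx | hx
  · have : k = 0 := deriv_expNegInvGlue_eq_zero <|
      sub_nonpos.2 <| pow_le_pow_left₀ (sub_nonneg.2 ht) hx 2
    simp [this]
  · have hinner : a * ⟪x - x₀, w⟫_ℝ ≤ |a| * ((r - t) * ‖w‖) :=
      calc a * ⟪x - x₀, w⟫_ℝ ≤ |a| * |⟪x - x₀, w⟫_ℝ| := (le_abs_self _).trans (abs_mul _ _).le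
        _ ≤ |a| * ((r - t) * ‖w‖) := by
          gcongr
          exact (abs_real_inner_le_norm _ _).trans (by gcongr)
    have hsq : 2 * (|a| * ‖w‖) ≤ a ^ 2 + ‖w‖ ^ 2 := by
      nlinarith [sq_nonneg (|a| - ‖w‖), sq_abs a]
    calc 2 * a * k * ⟪x - x₀, w⟫_ℝ = 2 * k * (a * ⟪x - x₀, w⟫_ℝ) := by ring
      _ ≤ 2 * k * (|a| * ((r - t) * ‖w‖)) := by gcongr
      _ = (r - t) * k * (2 * (|a| * ‖w‖)) := by ring
      _ ≤ (r - t) * k * (a ^ 2 + ‖w‖ ^ 2) := by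
        have : 0 ≤ r - t := sub_nonneg.2 ht
        gcongr

/-- `U (x, t)` solves the damped wave equation `U_tt - ΔU + U_t = 0` for `t > 0`, with data
`U = f` and `U_t = g` at `t = 0`. -/
structure IsDampedWave [FiniteDimensional ℝ E] (U : E × ℝ → ℝ) (f g : E → ℝ) : Prop where
  contDiffOn : ContDiffOn ℝ 2 U (univ ×ˢ Ici 0)
  eqn : ∀ x, ∀ t > (0 : ℝ),
    timeDeriv (timeDeriv U) (x, t) - Δ (fun y => U (y, t)) x + timeDeriv U (x, t) = 0
  init : ∀ x, U (x, 0) = f x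
  deriv_init : ∀ x, timeDeriv U (x, 0) = g x

/-- The wave energy density `U_t² + |∇U|²`, localized to the backward light cone below `(x₀, r)`. -/
def coneEnergyDensity [CompleteSpace E] (U : E × ℝ → ℝ) (x₀ : E) (r : ℝ) (p : E × ℝ) : ℝ :=
  coneCutoff x₀ r p * (timeDeriv U p ^ 2 + ‖spaceGrad U p‖ ^ 2)

theorem inner_gradient_mul [CompleteSpace E] {a b : E → ℝ} (ha : DifferentiableAt ℝ a x)
    (hb : DifferentiableAt ℝ b x) (w : E) :
    ⟪∇ (fun y => a y * b y) x, w⟫_ℝ = a x * ⟪∇ b x, w⟫_ℝ + b x * ⟪∇ a x, w⟫_ℝ := by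
  simp [inner_gradient_left, fderiv_fun_mul ha hb]

theorem contDiffOn_coneEnergyDensity [CompleteSpace E] (hU : ContDiffOn ℝ 2 U (univ ×ˢ Ici 0)) :
    ContDiffOn ℝ 1 (coneEnergyDensity U x₀ r) (univ ×ˢ Ici 0) :=
  contDiff_coneCutoff.contDiffOn.mul (((contDiffOn_timeDeriv hU le_rfl).pow 2).add
    ((contDiffOn_spaceGrad hU le_rfl).norm_sq ℝ))

theorem timeDeriv_coneEnergyDensity [CompleteSpace E] (hU : ContDiffOn ℝ 2 U (univ ×ˢ Ici 0))
    (ht : 0 < t) : timeDeriv (coneEnergyDensity U x₀ r) (x, t) =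
      -(2 * (r - t) * deriv expNegInvGlue ((r - t) ^ 2 - ‖x - x₀‖ ^ 2)) *
          (timeDeriv U (x, t) ^ 2 + ‖spaceGrad U (x, t)‖ ^ 2) +
        coneCutoff x₀ r (x, t) * (2 * timeDeriv U (x, t) * timeDeriv (timeDeriv U) (x, t) +
          2 * ⟪spaceGrad U (x, t), spaceGrad (timeDeriv U) (x, t)⟫_ℝ) := by
  have hvelocity : HasDerivAt (fun s => timeDeriv U (x, s)) (timeDeriv (timeDeriv U) (x, t)) t :=
    hasDerivAt_timeDeriv ((contDiffOn_timeDeriv hU le_rfl).differentiableOn one_ne_zero) ht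
  have henergy : HasDerivAt (fun s => coneEnergyDensity U x₀ r (x, s))
      (timeDeriv (coneEnergyDensity U x₀ r) (x, t)) t :=
    hasDerivAt_timeDeriv ((contDiffOn_coneEnergyDensity hU).differentiableOn one_ne_zero) ht
  rw [henergy.unique (hasDerivAt_coneCutoff.fun_mul
    ((hvelocity.fun_pow 2).fun_add (hasDerivAt_spaceGrad hU ht).norm_sq))]
  simp

theorem coneEnergyDensity_eq_zero_of_notMem [CompleteSpace E] (ht : t ∈ Icc 0 r)
    (hx : x ∉ closedBall x₀ r) : coneEnergyDensity U x₀ r (x, t) = 0 := by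
  rw [mem_closedBall, dist_eq_norm, not_le] at hx
  rw [coneEnergyDensity, coneCutoff_eq_zero ht.2 (by linarith [ht.1]), zero_mul]

theorem coneEnergyDensity_nonneg [CompleteSpace E] (p : E × ℝ) : 0 ≤ coneEnergyDensity U x₀ r p :=
  mul_nonneg (coneCutoff_nonneg p) (by positivity)

namespace IsDampedWave

variable [FiniteDimensional ℝ E]

theorem differentiableOn (hU : IsDampedWave U f g) : DifferentiableOn ℝ U (univ ×ˢ Ici 0) :=
  hU.contDiffOn.differentiableOn two_ne_zero

theorem contDiffOn_timeDeriv (hU : IsDampedWave U f g) :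
    ContDiffOn ℝ 1 (timeDeriv U) (univ ×ˢ Ici 0) :=
  _root_.contDiffOn_timeDeriv hU.contDiffOn le_rfl

theorem timeDeriv_coneEnergyDensity_le (hU : IsDampedWave U f g) (ht : t ∈ Ioo 0 r) :
    timeDeriv (coneEnergyDensity U x₀ r) (x, t) ≤
      2 * (coneCutoff x₀ r (x, t) * timeDeriv U (x, t) * Δ (fun y => U (y, t)) x +
        ⟪∇ (fun y => coneCutoff x₀ r (y, t) * timeDeriv U (y, t)) x,
          ∇ (fun y => U (y, t)) x⟫_ℝ) := by
  have hcut : Differentiable ℝ fun y => coneCutoff x₀ r (y, t) :=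
    (contDiff_slice contDiff_coneCutoff.contDiffOn ht.1.le).differentiable one_ne_zero
  have hvelocity : Differentiable ℝ fun y => timeDeriv U (y, t) :=
    (contDiff_slice hU.contDiffOn_timeDeriv ht.1.le).differentiable one_ne_zero
  have hcone := two_mul_inner_le_of_mem_cone (x := x) (x₀ := x₀) (w := spaceGrad U (x, t))
    (a := timeDeriv U (x, t)) ht.2.le
  have hdamp : 0 ≤ coneCutoff x₀ r (x, t) * timeDeriv U (x, t) ^ 2 :=
    mul_nonneg (coneCutoff_nonneg _) (sq_nonneg _)
  have heqn : timeDeriv (timeDeriv U) (x, t) = Δ (fun y => U (y, t)) x - timeDeriv U (x, t) := by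
    linarith [hU.eqn x t ht.1]
  rw [timeDeriv_coneEnergyDensity hU.contDiffOn ht.1, heqn, inner_gradient_mul (hcut x)
    (hvelocity x), inner_gradient_coneCutoff, real_inner_comm (spaceGrad (timeDeriv U) (x, t))]
  simp only [spaceGrad] at hcone ⊢
  linear_combination 2 * hcone + 2 * hdamp

theorem hasDerivAt_integral_coneEnergyDensity [MeasurableSpace E] [BorelSpace E]
    (hU : IsDampedWave U f g) (ht : t ∈ Ioo 0 r) :
    Integrable (fun x => timeDeriv (coneEnergyDensity U x₀ r) (x, t)) ∧
      HasDerivAt (fun s => ∫ x, coneEnergyDensity U x₀ r (x, s))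
        (∫ x, timeDeriv (coneEnergyDensity U x₀ r) (x, t)) t := by
  have hdensity := contDiffOn_coneEnergyDensity (x₀ := x₀) (r := r) hU.contDiffOn
  have hsub : (univ : Set E) ×ˢ Ioo 0 r ⊆ univ ×ˢ Ici 0 := prod_mono_right fun s hs => hs.1.le
  exact hasDerivAt_integral_of_compact_support isOpen_Ioo (isCompact_closedBall x₀ r)
    (hdensity.continuousOn.mono hsub)
    ((_root_.contDiffOn_timeDeriv hdensity (m := 0) le_rfl).continuousOn.mono hsub)
    (fun x s hs => hasDerivAt_timeDeriv (hdensity.differentiableOn one_ne_zero) hs.1)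
    (fun x hx s hs => coneEnergyDensity_eq_zero_of_notMem (Ioo_subset_Icc_self hs) hx) ht

theorem integral_timeDeriv_coneEnergyDensity_nonpos [MeasurableSpace E] [BorelSpace E]
    (hU : IsDampedWave U f g) (ht : t ∈ Ioo 0 r) :
    ∫ x, timeDeriv (coneEnergyDensity U x₀ r) (x, t) ≤ 0 := by
  set ψ : E → ℝ := fun y => coneCutoff x₀ r (y, t) * timeDeriv U (y, t)
  have hψ : ContDiff ℝ 1 ψ := contDiff_slice (U := fun p => coneCutoff x₀ r p * _)
    (contDiff_coneCutoff.contDiffOn.mul hU.contDiffOn_timeDeriv) ht.1.le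
  have hψc : HasCompactSupport ψ := .intro (isCompact_closedBall x₀ r) fun x hx => by
    rw [mem_closedBall, dist_eq_norm, not_le] at hx
    exact mul_eq_zero_of_left (coneCutoff_eq_zero ht.2.le (by linarith [ht.1])) _
  have hslice := contDiff_slice hU.contDiffOn ht.1.le
  have hψc' : HasCompactSupport (∇ ψ) :=
    (hψc.fderiv ℝ).comp_left (map_zero (toDual ℝ E).symm)
  have hint : Integrable fun x => 2 * (ψ x * Δ (fun y => U (y, t)) x +
      ⟪∇ ψ x, ∇ (fun y => U (y, t)) x⟫_ℝ) := by
    refine .const_mul (.add ?_ ?_) 2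
    · exact (hψ.continuous.mul
        (continuous_laplacian hslice)).integrable_of_hasCompactSupport hψc.mul_right
    · exact ((continuous_gradient hψ).inner (continuous_gradient
        (hslice.of_le one_le_two))).integrable_of_hasCompactSupport
        (hψc'.mono fun x hx hzero => hx (by simp [hzero]))
  calc ∫ x, timeDeriv (coneEnergyDensity U x₀ r) (x, t)
      ≤ ∫ x, 2 * (ψ x * Δ (fun y => U (y, t)) x + ⟪∇ ψ x, ∇ (fun y => U (y, t)) x⟫_ℝ) :=
        integral_mono (hU.hasDerivAt_integral_coneEnergyDensity ht).1 hint
          fun x => hU.timeDeriv_coneEnergyDensity_le ht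
    _ = 0 := by
        rw [integral_const_mul, integral_mul_laplacian_add_inner_gradient hψ hψc hslice, mul_zero]

theorem antitoneOn_integral_coneEnergyDensity [MeasurableSpace E] [BorelSpace E]
    (hU : IsDampedWave U f g) :
    AntitoneOn (fun s => ∫ x, coneEnergyDensity U x₀ r (x, s)) (Icc 0 r) := by
  have hdensity := contDiffOn_coneEnergyDensity (x₀ := x₀) (r := r) hU.contDiffOn
  have hcont : ContinuousOn (fun s => ∫ x, coneEnergyDensity U x₀ r (x, s)) (Icc 0 r) :=
    continuousOn_integral_of_compact_support (isCompact_closedBall x₀ r)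
      (hdensity.continuousOn.comp (by fun_prop) fun p hp => ⟨trivial, hp.1.1⟩)
      fun s x hs hx => coneEnergyDensity_eq_zero_of_notMem hs hx
  refine antitoneOn_of_deriv_nonpos (convex_Icc 0 r) hcont ?_ ?_ <;> rw [interior_Icc]
  · exact fun s hs =>
      (hU.hasDerivAt_integral_coneEnergyDensity hs).2.differentiableAt.differentiableWithinAt
  · intro s hs
    rw [(hU.hasDerivAt_integral_coneEnergyDensity hs).2.deriv]
    exact hU.integral_timeDeriv_coneEnergyDensity_nonpos hs

theorem coneEnergyDensity_eq_zero (hU : IsDampedWave U f g) (hf : ∀ x ∈ ball x₀ r, f x = 0)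
    (hg : ∀ x ∈ ball x₀ r, g x = 0) (ht : t ∈ Icc 0 r) : coneEnergyDensity U x₀ r (x, t) = 0 := by
  borelize E
  have hinit (y : E) : coneEnergyDensity U x₀ r (y, 0) = 0 := by
    by_cases hy : y ∈ ball x₀ r
    · have hf' : (fun z => U (z, 0)) =ᶠ[𝓝 y] fun _ => 0 := by
        filter_upwards [isOpen_ball.mem_nhds hy] with z hz using (hU.init z).trans (hf z hz)
      have hgrad : spaceGrad U (y, 0) = 0 := hf'.gradient_eq.trans (gradient_fun_const y 0)
      rw [coneEnergyDensity, hU.deriv_init, hg y hy, hgrad]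
      simp
    · rw [mem_ball, dist_eq_norm, not_lt] at hy
      rw [coneEnergyDensity, coneCutoff_eq_zero (ht.1.trans ht.2) (by simpa using hy), zero_mul]
  have henergy : ∫ y, coneEnergyDensity U x₀ r (y, t) ≤ 0 := by
    simpa only [hinit, integral_zero] using
      hU.antitoneOn_integral_coneEnergyDensity (x₀ := x₀) (left_mem_Icc.2 (ht.1.trans ht.2)) ht ht.1
  have hcont : Continuous fun y => coneEnergyDensity U x₀ r (y, t) :=
    (contDiff_slice (contDiffOn_coneEnergyDensity hU.contDiffOn) ht.1).continuous
  have hint : Integrable fun y => coneEnergyDensity U x₀ r (y, t) :=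
    hcont.integrable_of_hasCompactSupport <| .intro (isCompact_closedBall x₀ r)
      fun y hy => coneEnergyDensity_eq_zero_of_notMem ht hy
  have hae := (integral_eq_zero_iff_of_nonneg (fun y => coneEnergyDensity_nonneg (y, t)) hint).1
    (henergy.antisymm (integral_nonneg fun y => coneEnergyDensity_nonneg (y, t)))
  exact congrFun ((hcont.ae_eq_iff_eq volume continuous_const).1 hae) x

theorem timeDeriv_apex_eq_zero (hU : IsDampedWave U f g) (hf : ∀ x ∈ ball x₀ r, f x = 0)
    (hg : ∀ x ∈ ball x₀ r, g x = 0) (ht : t ∈ Ico 0 r) : timeDeriv U (x₀, t) = 0 := by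
  have hdensity := hU.coneEnergyDensity_eq_zero hf hg (x := x₀) (Ico_subset_Icc_self ht)
  rw [coneEnergyDensity, mul_eq_zero_iff_left (coneCutoff_apex_pos ht.2).ne',
    add_eq_zero_iff_of_nonneg (by positivity) (by positivity)] at hdensity
  exact pow_eq_zero_iff two_ne_zero |>.1 hdensity.1

theorem apex_eq_zero (hU : IsDampedWave U f g) (hf : ∀ x ∈ ball x₀ r, f x = 0)
    (hg : ∀ x ∈ ball x₀ r, g x = 0) (ht : t ∈ Ico 0 r) : U (x₀, t) = 0 := by
  have hcont : ContinuousOn (fun s => U (x₀, s)) (Icc 0 t) :=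
    hU.contDiffOn.continuousOn.comp (f := fun s => (x₀, s)) (by fun_prop)
      fun s hs => mk_mem_prod (mem_univ _) hs.1
  have hderiv (s) (hs : s ∈ Ico 0 t) : HasDerivWithinAt (fun s => U (x₀, s)) 0 (Ici s) s := by
    rw [← hU.timeDeriv_apex_eq_zero hf hg ⟨hs.1, hs.2.trans ht.2⟩]
    exact (hasDerivWithinAt_timeDeriv hU.differentiableOn hs.1).mono (Ici_subset_Ici.2 hs.1)
  rw [constant_of_has_deriv_right_zero hcont hderiv t (right_mem_Icc.2 ht.1), hU.init,
    hf x₀ (mem_ball_self (ht.1.trans_lt ht.2))]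

theorem eq_zero_of_add_lt_norm (hU : IsDampedWave U f g) (hf : ∀ x, R < ‖x‖ → f x = 0)
    (hg : ∀ x, R < ‖x‖ → g x = 0) (ht : 0 ≤ t) (hx : R + t < ‖x‖) :
    U (x, t) = 0 ∧ timeDeriv U (x, t) = 0 := by
  have hball : ∀ y ∈ ball x (‖x‖ - R), R < ‖y‖ := fun y hy => by
    linarith [mem_ball_iff_norm'.1 hy, norm_sub_norm_le x y]
  have ht' : t ∈ Ico 0 (‖x‖ - R) := ⟨ht, by linarith⟩
  exact ⟨hU.apex_eq_zero (fun y hy => hf y (hball y hy)) (fun y hy => hg y (hball y hy)) ht',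
    hU.timeDeriv_apex_eq_zero (fun y hy => hf y (hball y hy)) (fun y hy => hg y (hball y hy)) ht'⟩

end IsDampedWave

end FinitePropagation

section DampedOscillator

theorem le_exp_mul_of_hasDerivAt_le {y y' : ℝ → ℝ} {c t : ℝ} (hy : ContinuousOn y (Ici 0))
    (hy' : ∀ s > 0, HasDerivAt y (y' s) s) (hle : ∀ s > 0, y' s ≤ -c * y s) (ht : 0 ≤ t) :
    y t ≤ exp (-c * t) * y 0 := by
  have hderiv (s) (hs : 0 < s) : HasDerivAt (fun s => exp (c * s) * y s)
      (exp (c * s) * (c * y s + y' s)) s := by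
    have hexp : HasDerivAt (fun s => exp (c * s)) (exp (c * s) * c) s := by
      simpa using ((hasDerivAt_id s).const_mul c).exp
    exact (hexp.fun_mul (hy' s hs)).congr_deriv (by ring)
  have hanti : AntitoneOn (fun s => exp (c * s) * y s) (Ici 0) := by
    refine antitoneOn_of_deriv_nonpos (convex_Ici 0)
      ((Continuous.continuousOn (by fun_prop)).mul hy) ?_ ?_ <;> rw [interior_Ici]
    · exact fun s hs => (hderiv s hs).differentiableAt.differentiableWithinAt
    · intro s hs
      rw [(hderiv s hs).deriv]
      exact mul_nonpos_of_nonneg_of_nonpos (exp_pos _).le (by linarith [hle s hs])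
  have h := hanti (mem_Ici.2 le_rfl) (mem_Ici.2 ht) ht
  simp only [mul_zero, exp_zero, one_mul] at h
  rwa [neg_mul, exp_neg, ← div_eq_inv_mul, le_div_iff₀' (exp_pos _)]

variable {H : Type*} [NormedAddCommGroup H]

theorem eq_exp_smul_of_hasDerivAt [NormedSpace ℝ H] {z : ℝ → H} {c t : ℝ}
    (hz : ContinuousOn z (Ici 0)) (hz' : ∀ s > 0, HasDerivAt z (-c • z s) s) (ht : 0 ≤ t) :
    z t = exp (-c * t) • z 0 := by
  have hcont : ContinuousOn (fun s => exp (c * s) • z s) (Ici 0) :=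
    (Continuous.continuousOn (by fun_prop)).smul hz
  have hpos (s) (hs : 0 < s) : HasDerivAt (fun s => exp (c * s) • z s) 0 s := by
    have hexp : HasDerivAt (fun s => exp (c * s)) (exp (c * s) * c) s := by
      simpa using ((hasDerivAt_id s).const_mul c).exp
    exact (hexp.fun_smul (hz' s hs)).congr_deriv (by module)
  have hzero : HasDerivWithinAt (fun s => exp (c * s) • z s) 0 (Ici 0) 0 :=
    hasDerivWithinAt_Ici_of_tendsto_deriv
      (fun s hs => (hpos s hs).differentiableAt.differentiableWithinAt)
      ((hcont 0 self_mem_Ici).mono Ioi_subset_Ici_self) self_mem_nhdsWithin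
      (tendsto_const_nhds.congr' (by filter_upwards [self_mem_nhdsWithin] with s hs using
        (hpos s hs).deriv.symm))
  have hconst : exp (c * t) • z t = exp (c * 0) • z 0 :=
    constant_of_has_deriv_right_zero (hcont.mono Icc_subset_Ici_self)
      (fun s hs => hs.1.eq_or_lt.elim (fun h => h ▸ hzero) fun h => (hpos s h).hasDerivWithinAt)
      t (right_mem_Icc.2 ht)
  rw [mul_zero, exp_zero, one_smul] at hconst
  rw [← hconst, smul_smul, ← exp_add, neg_mul, neg_add_cancel, exp_zero, one_smul]

variable [InnerProductSpace ℝ H] {w v : ℝ → H} {ρ θ t : ℝ}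

/-- Position `w` and velocity `v` of the damped oscillator `w'' + w' + ρ w = 0` on `t ≥ 0`. -/
structure IsDampedOscillator (ρ : ℝ) (w v : ℝ → H) : Prop where
  continuousOn_position : ContinuousOn w (Ici 0)
  continuousOn_velocity : ContinuousOn v (Ici 0)
  hasDerivAt_position : ∀ t > 0, HasDerivAt w (v t) t
  hasDerivAt_velocity : ∀ t > 0, HasDerivAt v (-v t - ρ • w t) t

/-- A Lyapunov function of the damped oscillator at position `p` and velocity `q`: the energy
`‖q‖² + ρ ‖p‖²` with a small cross term, which makes it strictly dissipated. -/
def oscillatorLyapunov (ρ θ : ℝ) (p q : H) : ℝ := ‖q‖ ^ 2 + ρ * ‖p‖ ^ 2 + θ * ⟪p, q⟫_ℝ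

theorem sq_add_two_mul_inner_add_sq_nonneg (κ : ℝ) (p q : H) :
    0 ≤ ‖q‖ ^ 2 + 2 * κ * ⟪p, q⟫_ℝ + κ ^ 2 * ‖p‖ ^ 2 := by
  have h : ‖q + κ • p‖ ^ 2 = ‖q‖ ^ 2 + 2 * κ * ⟪p, q⟫_ℝ + κ ^ 2 * ‖p‖ ^ 2 := by
    rw [norm_add_sq_real, inner_smul_right, norm_smul, mul_pow, norm_eq_abs, sq_abs,
      real_inner_comm]
    ring
  exact h ▸ sq_nonneg _

theorem mul_norm_sq_le_oscillatorLyapunov (hθ : θ ∈ Icc 0 1) (hρ : θ ≤ ρ) (p q : H) :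
    θ / 2 * ‖p‖ ^ 2 ≤ oscillatorLyapunov ρ θ p q := by
  have hsq := sq_add_two_mul_inner_add_sq_nonneg (θ / 2) p q
  have hcoef : θ / 2 + (θ / 2) ^ 2 ≤ ρ := by nlinarith [hθ.1, hθ.2]
  have := mul_le_mul_of_nonneg_right hcoef (sq_nonneg ‖p‖)
  rw [oscillatorLyapunov]
  linarith

theorem oscillatorLyapunov_le (hθ : θ ∈ Icc 0 1) (hρ : 0 ≤ ρ) (p q : H) :
    oscillatorLyapunov ρ θ p q ≤ (‖q‖ + (1 + ρ) * ‖p‖) ^ 2 := by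
  have hinner : θ * ⟪p, q⟫_ℝ ≤ 1 * (‖p‖ * ‖q‖) :=
    (mul_le_mul_of_nonneg_left (real_inner_le_norm p q) hθ.1).trans (by gcongr; exact hθ.2)
  have : 0 ≤ (1 + ρ + ρ ^ 2) * ‖p‖ ^ 2 + (1 + 2 * ρ) * (‖p‖ * ‖q‖) := by positivity
  rw [oscillatorLyapunov]
  linarith

namespace IsDampedOscillator

theorem velocity_add_smul_position (hw : IsDampedOscillator ρ w v) {a b : ℝ} (hab : a + b = 1)
    (hρ : a * b = ρ) (ht : 0 ≤ t) : v t + b • w t = exp (-a * t) • (v 0 + b • w 0) := by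
  refine eq_exp_smul_of_hasDerivAt (z := fun s => v s + b • w s)
    (hw.continuousOn_velocity.add (hw.continuousOn_position.const_smul b)) (fun s hs =>
    ((hw.hasDerivAt_velocity s hs).add ((hw.hasDerivAt_position s hs).const_smul b)).congr_deriv ?_)
    ht
  obtain rfl : b = 1 - a := by linarith
  rw [← hρ]
  module

theorem sub_smul_position (hw : IsDampedOscillator ρ w v) {a b : ℝ} (hab : a + b = 1)
    (hρ : a * b = ρ) (ht : 0 ≤ t) :
    (b - a) • w t = exp (-a * t) • (v 0 + b • w 0) - exp (-b * t) • (v 0 + a • w 0) := by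
  rw [← hw.velocity_add_smul_position hab hρ ht,
    ← hw.velocity_add_smul_position (by linarith) (by linarith) ht]
  module

theorem oscillatorLyapunov_le_exp_mul (hw : IsDampedOscillator ρ w v)
    (hθ : θ ∈ Icc 0 (1 / 2)) (hρ : θ ≤ ρ) (ht : 0 ≤ t) :
    oscillatorLyapunov ρ θ (w t) (v t) ≤
      exp (-(θ / 2) * t) * oscillatorLyapunov ρ θ (w 0) (v 0) := by
  refine le_exp_mul_of_hasDerivAt_le (y := fun s => oscillatorLyapunov ρ θ (w s) (v s))
    (((hw.continuousOn_velocity.norm.pow 2).add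
      (continuousOn_const.mul (hw.continuousOn_position.norm.pow 2))).add
      (continuousOn_const.mul (hw.continuousOn_position.inner hw.continuousOn_velocity)))
    (fun s hs => ((hw.hasDerivAt_velocity s hs).norm_sq.add
      ((hw.hasDerivAt_position s hs).norm_sq.const_mul ρ)).add
      (((hw.hasDerivAt_position s hs).inner ℝ (hw.hasDerivAt_velocity s hs)).const_mul θ))
    (fun s _ => ?_) ht
  have hsq := sq_add_two_mul_inner_add_sq_nonneg (θ * (1 - θ / 2) / 2) (w s) (v s)
  have hcoef : (θ * (1 - θ / 2) / 2) ^ 2 ≤ θ * ρ / 2 := by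
    have : (1 - θ / 2) ^ 2 ≤ 1 := by nlinarith [hθ.1, hθ.2]
    nlinarith [mul_le_mul_of_nonneg_left this (sq_nonneg θ),
      mul_le_mul_of_nonneg_left hρ hθ.1, sq_nonneg θ]
  have hposition := mul_le_mul_of_nonneg_right hcoef (sq_nonneg ‖w s‖)
  simp only [oscillatorLyapunov, inner_sub_right, inner_neg_right, inner_smul_right,
    real_inner_self_eq_norm_sq, real_inner_comm (w s) (v s)]
  nlinarith [mul_nonneg (by linarith [hθ.2] : (0 : ℝ) ≤ 1 - 3 * θ / 2) (sq_nonneg ‖v s‖)]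

theorem norm_position_le_exp_mul (hw : IsDampedOscillator ρ w v) (hθ : θ ∈ Ioc 0 (1 / 2))
    (hρ : θ ≤ ρ) (ht : 0 ≤ t) :
    ‖w t‖ ≤ 2 / θ * exp (-(θ / 4) * t) * (‖v 0‖ + (1 + ρ) * ‖w 0‖) := by
  have hθ' : θ ∈ Icc 0 1 := ⟨hθ.1.le, by linarith [hθ.2]⟩
  have hθ0 : 0 < θ := hθ.1
  have hρ0 : 0 ≤ ρ := hθ0.le.trans hρ
  have hexp : exp (-(θ / 4) * t) ^ 2 = exp (-(θ / 2) * t) := by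
    rw [← exp_nat_mul]
    ring_nf
  have hθinv : 2 / θ ≤ (2 / θ) ^ 2 :=
    le_self_pow₀ ((one_le_div hθ0).2 (by linarith [hθ.2])) two_ne_zero
  refine (pow_le_pow_iff_left₀ (norm_nonneg _) (by positivity) two_ne_zero).1 ?_
  calc ‖w t‖ ^ 2 = 2 / θ * (θ / 2 * ‖w t‖ ^ 2) := by field_simp
    _ ≤ 2 / θ * oscillatorLyapunov ρ θ (w t) (v t) := by
        gcongr; exact mul_norm_sq_le_oscillatorLyapunov hθ' hρ (w t) (v t)
    _ ≤ 2 / θ * (exp (-(θ / 2) * t) * oscillatorLyapunov ρ θ (w 0) (v 0)) := by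
        gcongr; exact hw.oscillatorLyapunov_le_exp_mul (Ioc_subset_Icc_self hθ) hρ ht
    _ ≤ 2 / θ * (exp (-(θ / 2) * t) * (‖v 0‖ + (1 + ρ) * ‖w 0‖) ^ 2) := by
        gcongr; exact oscillatorLyapunov_le hθ' hρ0 (w 0) (v 0)
    _ ≤ (2 / θ) ^ 2 * (exp (-(θ / 2) * t) * (‖v 0‖ + (1 + ρ) * ‖w 0‖) ^ 2) := by gcongr
    _ = (2 / θ * exp (-(θ / 4) * t) * (‖v 0‖ + (1 + ρ) * ‖w 0‖)) ^ 2 := by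
        rw [mul_pow, mul_pow, hexp, mul_assoc]

theorem exists_norm_position_sub_le (hw : IsDampedOscillator ρ w v) (hρ : ρ ∈ Icc 0 (3 / 16)) :
    ∃ a ∈ Icc ρ (2 * ρ), ∃ c ∈ Icc (1 : ℝ) 2, ∀ t ≥ 0,
      ‖w t - (c * exp (-a * t)) • (v 0 + w 0 - a • w 0)‖ ≤
        2 * exp (-(1 / 2) * t) * (‖v 0‖ + ‖w 0‖) := by
  obtain ⟨hρ0, hρ1⟩ := hρ
  -- The decay rates are the roots `(1 ∓ d) / 2` of `a² - a + ρ = 0`.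
  set d := √(1 - 4 * ρ)
  have hd : d ^ 2 = 1 - 4 * ρ := sq_sqrt (by linarith)
  have hd1 : d ≤ 1 := by nlinarith [sqrt_nonneg (1 - 4 * ρ)]
  have hd2 : 1 / 2 ≤ d := by nlinarith [sqrt_nonneg (1 - 4 * ρ)]
  have hd0 : 0 < d := by linarith
  refine ⟨(1 - d) / 2, ⟨by nlinarith, by nlinarith⟩, d⁻¹,
    ⟨(one_le_inv₀ hd0).2 hd1, inv_le_of_inv_le₀ two_pos (by linarith)⟩, fun t ht => ?_⟩
  have hformula := hw.sub_smul_position (a := (1 - d) / 2) (b := (1 + d) / 2) (by ring)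
    (by nlinarith) ht
  rw [show (1 + d) / 2 - (1 - d) / 2 = d by ring] at hformula
  have herror : w t - (d⁻¹ * exp (-((1 - d) / 2) * t)) • (v 0 + w 0 - ((1 - d) / 2) • w 0) =
      -(d⁻¹ * exp (-((1 + d) / 2) * t)) • (v 0 + ((1 - d) / 2) • w 0) := by
    rw [← inv_smul_smul₀ hd0.ne' (w t), hformula]
    module
  have hfast : ‖v 0 + ((1 - d) / 2) • w 0‖ ≤ ‖v 0‖ + ‖w 0‖ := by
    refine (norm_add_le _ _).trans ?_
    rw [norm_smul, norm_of_nonneg (by linarith)]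
    gcongr
    exact mul_le_of_le_one_left (norm_nonneg _) (by linarith)
  rw [herror, norm_smul, norm_neg, norm_of_nonneg (by positivity)]
  gcongr
  · exact inv_le_of_inv_le₀ two_pos (by linarith)
  · linarith

section Complex

variable {w v : ℝ → ℂ} {M : ℝ}

theorem le_re_position_of_slow (hw : IsDampedOscillator ρ w v) (hρ : ρ ∈ Icc 0 (3 / 16))
    (hM : 0 ≤ M) (hmass : M / 2 ≤ (v 0 + w 0).re) (hw0 : 2 * ρ * ‖w 0‖ ≤ M / 4) (ht : 0 ≤ t) :
    M / 4 * exp (-(2 * ρ) * t) - 2 * exp (-(1 / 2) * t) * (‖v 0‖ + ‖w 0‖) ≤ (w t).re := by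
  obtain ⟨a, ⟨ha, ha'⟩, c, ⟨hc, -⟩, h⟩ := hw.exists_norm_position_sub_le hρ
  have herror := (abs_le.1 ((Complex.abs_re_le_norm _).trans (h t ht))).1
  have hamplitude : M / 4 ≤ (v 0 + w 0 - a • w 0).re := by
    have : a * (w 0).re ≤ 2 * ρ * ‖w 0‖ :=
      (mul_le_mul_of_nonneg_left (Complex.re_le_norm _) (hρ.1.trans ha)).trans (by gcongr)
    rw [Complex.sub_re, Complex.smul_re, smul_eq_mul]
    linarith
  have hmain : M / 4 * exp (-(2 * ρ) * t) ≤
      c * exp (-a * t) * (v 0 + w 0 - a • w 0).re := by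
    calc M / 4 * exp (-(2 * ρ) * t) = 1 * exp (-(2 * ρ) * t) * (M / 4) := by ring
      _ ≤ c * exp (-a * t) * (v 0 + w 0 - a • w 0).re := by gcongr
  rw [Complex.sub_re, Complex.smul_re, smul_eq_mul] at herror
  linarith

theorem abs_im_position_le_of_slow (hw : IsDampedOscillator ρ w v) (hρ : ρ ∈ Icc 0 (3 / 16))
    (ht : 0 ≤ t) : |(w t).im| ≤ 2 * exp (-ρ * t) * (|(v 0 + w 0).im| + 2 * ρ * |(w 0).im|) +
      2 * exp (-(1 / 2) * t) * (‖v 0‖ + ‖w 0‖) := by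
  obtain ⟨a, ⟨ha, ha'⟩, c, ⟨hc, hc'⟩, h⟩ := hw.exists_norm_position_sub_le hρ
  have ha0 : 0 ≤ a := hρ.1.trans ha
  have herror := (Complex.abs_im_le_norm _).trans (h t ht)
  have hamplitude : |(v 0 + w 0 - a • w 0).im| ≤ |(v 0 + w 0).im| + 2 * ρ * |(w 0).im| := by
    rw [Complex.sub_im, Complex.smul_im, smul_eq_mul]
    refine (abs_sub _ _).trans ?_
    rw [abs_mul, abs_of_nonneg ha0]
    gcongr
  have hmain : |((c * exp (-a * t)) • (v 0 + w 0 - a • w 0)).im| ≤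
      2 * exp (-ρ * t) * (|(v 0 + w 0).im| + 2 * ρ * |(w 0).im|) := by
    rw [Complex.smul_im, smul_eq_mul, abs_mul, abs_of_nonneg (by positivity)]
    gcongr
  rw [Complex.sub_im] at herror
  linarith [abs_sub_abs_le_abs_sub (w t).im ((c * exp (-a * t)) • (v 0 + w 0 - a • w 0)).im]

theorem slow_error_le (hρ : 0 ≤ ρ) (hM : 0 ≤ M) (hθ : θ ∈ Ioc 0 (1 / 2)) (ht : 0 ≤ t) (p q : ℂ) :
    2 * exp (-(1 / 2) * t) * (‖q‖ + ‖p‖) ≤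
      exp (-(θ / 4) * t) * ((2 + 2 / θ + M) * (‖q‖ + (1 + ρ) * ‖p‖ + exp (-ρ))) := by
  have hθ0 : 0 < θ := hθ.1
  have hrate : exp (-(1 / 2) * t) ≤ exp (-(θ / 4) * t) :=
    exp_le_exp.2 (mul_le_mul_of_nonneg_right (by linarith [hθ.2]) ht)
  calc 2 * exp (-(1 / 2) * t) * (‖q‖ + ‖p‖)
      ≤ 2 * exp (-(θ / 4) * t) * (‖q‖ + ‖p‖) := by gcongr
    _ = exp (-(θ / 4) * t) * ((2 + 0 + 0) * (‖q‖ + (1 + 0) * ‖p‖ + 0)) := by ring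
    _ ≤ exp (-(θ / 4) * t) * ((2 + 2 / θ + M) * (‖q‖ + (1 + ρ) * ‖p‖ + exp (-ρ))) := by
      gcongr <;> positivity

theorem norm_position_add_le_of_fast (hw : IsDampedOscillator ρ w v) (hM : 0 ≤ M)
    (hθ : θ ∈ Ioc 0 (1 / 2)) (hρ : θ ≤ ρ) (ht : 1 ≤ t) :
    M / 4 * exp (-(2 * ρ) * t) + ‖w t‖ ≤
      exp (-(θ / 4) * t) * ((2 + 2 / θ + M) * (‖v 0‖ + (1 + ρ) * ‖w 0‖ + exp (-ρ))) := by
  have hθ0 : 0 < θ := hθ.1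
  have hρ0 : 0 ≤ ρ := hθ0.le.trans hρ
  have hexp : exp (-(2 * ρ) * t) ≤ exp (-(θ / 4) * t) * exp (-ρ) := by
    rw [← exp_add]
    gcongr
    nlinarith
  calc M / 4 * exp (-(2 * ρ) * t) + ‖w t‖
      ≤ M * (exp (-(θ / 4) * t) * exp (-ρ)) +
          2 / θ * exp (-(θ / 4) * t) * (‖v 0‖ + (1 + ρ) * ‖w 0‖) := by
        gcongr
        · linarith
        · exact hw.norm_position_le_exp_mul hθ hρ (zero_le_one.trans ht)
    _ = exp (-(θ / 4) * t) * (2 / θ * (‖v 0‖ + (1 + ρ) * ‖w 0‖) + M * exp (-ρ)) := by ring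
    _ ≤ exp (-(θ / 4) * t) * ((2 + 2 / θ + M) * (‖v 0‖ + (1 + ρ) * ‖w 0‖ + exp (-ρ))) := by
        gcongr
        have : 0 ≤ (2 + M) * (‖v 0‖ + (1 + ρ) * ‖w 0‖) + (2 + 2 / θ) * exp (-ρ) := by positivity
        linarith

theorem le_re_position (hw : IsDampedOscillator ρ w v) (hρ : 0 ≤ ρ) (hM : 0 ≤ M)
    (hθ : θ ∈ Ioc 0 (3 / 16)) (hmass : ρ ≤ θ → M / 2 ≤ (v 0 + w 0).re)
    (hw0 : ρ ≤ θ → 2 * ρ * ‖w 0‖ ≤ M / 4) (ht : 1 ≤ t) :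
    M / 4 * exp (-(2 * ρ) * t) - exp (-(θ / 4) * t) *
      ((2 + 2 / θ + M) * (‖v 0‖ + (1 + ρ) * ‖w 0‖ + exp (-ρ))) ≤ (w t).re := by
  have ht0 : 0 ≤ t := zero_le_one.trans ht
  have hθ' : θ ∈ Ioc 0 (1 / 2) := ⟨hθ.1, hθ.2.trans (by norm_num)⟩
  rcases le_total ρ θ with hslow | hfast
  · linarith [hw.le_re_position_of_slow ⟨hρ, hslow.trans hθ.2⟩ hM (hmass hslow) (hw0 hslow) ht0,
      slow_error_le hρ hM hθ' ht0 (w 0) (v 0)]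
  · linarith [hw.norm_position_add_le_of_fast hM hθ' hfast ht,
      neg_le_of_abs_le (Complex.abs_re_le_norm (w t))]

theorem abs_im_position_le (hw : IsDampedOscillator ρ w v) (hρ : 0 ≤ ρ) (hM : 0 ≤ M)
    (hθ : θ ∈ Ioc 0 (3 / 16)) (ht : 1 ≤ t) :
    |(w t).im| ≤ 2 * exp (-ρ * t) * (|(v 0 + w 0).im| + 2 * ρ * |(w 0).im|) +
      exp (-(θ / 4) * t) * ((2 + 2 / θ + M) * (‖v 0‖ + (1 + ρ) * ‖w 0‖ + exp (-ρ))) := by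
  have ht0 : 0 ≤ t := zero_le_one.trans ht
  have hθ' : θ ∈ Ioc 0 (1 / 2) := ⟨hθ.1, hθ.2.trans (by norm_num)⟩
  rcases le_total ρ θ with hslow | hfast
  · linarith [hw.abs_im_position_le_of_slow ⟨hρ, hslow.trans hθ.2⟩ ht0,
      slow_error_le hρ hM hθ' ht0 (w 0) (v 0)]
  · have hnonneg : 0 ≤ 2 * exp (-ρ * t) * (|(v 0 + w 0).im| + 2 * ρ * |(w 0).im|) +
        M / 4 * exp (-(2 * ρ) * t) := by positivity
    linarith [hw.norm_position_add_le_of_fast hM hθ' hfast ht, Complex.abs_im_le_norm (w t)]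

end Complex

end IsDampedOscillator

end DampedOscillator

section FourierReal

open scoped ContDiff RealInnerProductSpace

variable {E : Type*} [NormedAddCommGroup E] [InnerProductSpace ℝ E]

theorem abs_two_pi_mul_inner_le (x ξ : E) : |2 * π * ⟪x, ξ⟫| ≤ 2 * π * ‖ξ‖ * ‖x‖ := by
  rw [abs_mul, abs_of_pos two_pi_pos, mul_assoc _ ‖ξ‖, mul_comm ‖ξ‖]
  exact mul_le_mul_of_nonneg_left (abs_real_inner_le_norm x ξ) two_pi_pos.le

variable [FiniteDimensional ℝ E] [MeasurableSpace E] [BorelSpace E] {a b : E → ℝ}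

/-- The Fourier transform `∫ a(x) e^{-2πi⟨x, ξ⟩} dx` of a real-valued function. -/
def fourierReal (a : E → ℝ) (ξ : E) : ℂ := 𝓕 (fun x => (a x : ℂ)) ξ

theorem fourierReal_eq_integral (a : E → ℝ) (ξ : E) :
    fourierReal a ξ = ∫ x, Complex.exp ((-2 * π * ⟪x, ξ⟫ : ℝ) * Complex.I) * a x := by
  simp only [fourierReal, fourier_eq', smul_eq_mul]

theorem norm_fourierReal_le (a : E → ℝ) (ξ : E) : ‖fourierReal a ξ‖ ≤ ∫ x, |a x| := by
  rw [fourierReal_eq_integral]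
  refine (norm_integral_le_integral_norm _).trans_eq (integral_congr_ae (.of_forall fun x => ?_))
  simp only [norm_mul, Complex.norm_exp_ofReal_mul_I, one_mul, Complex.norm_real, norm_eq_abs]

theorem integrable_exp_inner_mul_ofReal (ha : Integrable a) (ξ : E) :
    Integrable fun x => Complex.exp ((-2 * π * ⟪x, ξ⟫ : ℝ) * Complex.I) * (a x : ℂ) := by
  have hi : Integrable fun x => (a x : ℂ) := ha.ofReal
  refine hi.mono ((Continuous.aestronglyMeasurable (by fun_prop)).mul hi.aestronglyMeasurable)
    (.of_forall fun x => ?_)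
  rw [norm_mul, Complex.norm_exp_ofReal_mul_I, one_mul]

theorem fourierReal_add (ha : Integrable a) (hb : Integrable b) (ξ : E) :
    fourierReal (fun x => a x + b x) ξ = fourierReal a ξ + fourierReal b ξ := by
  simp only [fourierReal_eq_integral, Complex.ofReal_add, mul_add]
  exact integral_add (integrable_exp_inner_mul_ofReal ha ξ) (integrable_exp_inner_mul_ofReal hb ξ)

theorem fourierReal_sub (ha : Integrable a) (hb : Integrable b) (ξ : E) :
    fourierReal (fun x => a x - b x) ξ = fourierReal a ξ - fourierReal b ξ := by
  simp only [fourierReal_eq_integral, Complex.ofReal_sub, mul_sub]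
  exact integral_sub (integrable_exp_inner_mul_ofReal ha ξ) (integrable_exp_inner_mul_ofReal hb ξ)

theorem fourierReal_sum {ι : Type*} (s : Finset ι) {a : ι → E → ℝ}
    (ha : ∀ i ∈ s, Integrable (a i)) (ξ : E) :
    fourierReal (fun x => ∑ i ∈ s, a i x) ξ = ∑ i ∈ s, fourierReal (a i) ξ := by
  simp only [fourierReal_eq_integral, Complex.ofReal_sum, Finset.mul_sum]
  exact integral_finsetSum s fun i hi => integrable_exp_inner_mul_ofReal (ha i hi) ξ

theorem continuous_fourierReal (ha : Integrable a) : Continuous (fourierReal a) :=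
  VectorFourier.fourierIntegral_continuous continuous_fourierChar (innerSL ℝ).continuous₂ ha.ofReal

theorem re_fourierReal (ha : Integrable a) (ξ : E) :
    (fourierReal a ξ).re = ∫ x, a x * cos (2 * π * ⟪x, ξ⟫) := by
  rw [fourierReal_eq_integral, ← RCLike.re_eq_complex_re,
    ← integral_re (integrable_exp_inner_mul_ofReal ha ξ)]
  refine integral_congr_ae (.of_forall fun x => ?_)
  simp only [RCLike.re_eq_complex_re, Complex.re_mul_ofReal, Complex.exp_ofReal_mul_I_re, neg_mul,
    cos_neg, mul_comm (a x)]

theorem im_fourierReal (ha : Integrable a) (ξ : E) :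
    (fourierReal a ξ).im = -∫ x, a x * sin (2 * π * ⟪x, ξ⟫) := by
  rw [fourierReal_eq_integral, ← RCLike.im_eq_complex_im,
    ← integral_im (integrable_exp_inner_mul_ofReal ha ξ), ← integral_neg]
  refine integral_congr_ae (.of_forall fun x => ?_)
  simp only [RCLike.im_eq_complex_im, Complex.im_mul_ofReal, Complex.exp_ofReal_mul_I_im, neg_mul,
    sin_neg, mul_comm (a x)]

section Derivatives

theorem fourier_fderiv_apply {b : E → ℂ} (hb : ContDiff ℝ 1 b) (hc : HasCompactSupport b)
    (ξ y : E) :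
    𝓕 (fun x => fderiv ℝ b x y) ξ = 2 * π * Complex.I * ⟪ξ, y⟫ * 𝓕 b ξ := by
  have hint : Integrable (fderiv ℝ b) :=
    (hb.continuous_fderiv one_ne_zero).integrable_of_hasCompactSupport (hc.fderiv ℝ)
  rw [← fourier_continuousLinearMap_apply hint,
    fourier_fderiv (hb.continuous.integrable_of_hasCompactSupport hc)
      (hb.differentiable one_ne_zero) hint]
  simp only [VectorFourier.fourierSMulRight_apply, neg_apply, innerSL_apply_apply ℝ, neg_smul,
    smul_eq_mul, Complex.real_smul]
  ring

theorem fourierReal_fderiv_apply (ha : ContDiff ℝ 1 a) (hc : HasCompactSupport a) (ξ y : E) :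
    fourierReal (fun x => fderiv ℝ a x y) ξ = 2 * π * Complex.I * ⟪ξ, y⟫ * fourierReal a ξ := by
  have hderiv (x : E) : ((fderiv ℝ a x y : ℝ) : ℂ) = fderiv ℝ (fun x => (a x : ℂ)) x y :=
    DFunLike.congr_fun (Complex.ofRealCLM.hasFDerivAt.comp x
      (ha.differentiable one_ne_zero x).hasFDerivAt).fderiv.symm y
  simp only [fourierReal, hderiv]
  exact fourier_fderiv_apply (Complex.ofRealCLM.contDiff.comp ha)
    (hc.comp_left Complex.ofReal_zero) ξ y

theorem fourierReal_laplacian (ha : ContDiff ℝ 2 a) (hc : HasCompactSupport a) (ξ : E) :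
    fourierReal (Δ a) ξ = -((4 * π ^ 2 * ‖ξ‖ ^ 2) • fourierReal a ξ) := by
  set e := stdOrthonormalBasis ℝ E
  have hd (i) : ContDiff ℝ 1 fun x => fderiv ℝ a x (e i) :=
    (ha.fderiv_right le_rfl).clm_apply contDiff_const
  have hdc (i) : HasCompactSupport fun x => fderiv ℝ a x (e i) := hc.fderiv_apply ℝ (e i)
  have hint (i) : Integrable fun x => fderiv ℝ (fun z => fderiv ℝ a z (e i)) x (e i) :=
    (((hd i).continuous_fderiv one_ne_zero).clm_apply
      continuous_const).integrable_of_hasCompactSupport ((hdc i).fderiv_apply ℝ (e i))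
  have hnorm : (‖ξ‖ : ℂ) ^ 2 = ∑ i, (⟪ξ, e i⟫ : ℂ) ^ 2 := by
    exact_mod_cast (e.sum_sq_inner_left ξ).symm
  have hmode (i) : fourierReal (fun x => fderiv ℝ (fun z => fderiv ℝ a z (e i)) x (e i)) ξ =
      -(4 * π ^ 2) * ⟪ξ, e i⟫ ^ 2 * fourierReal a ξ := by
    rw [fourierReal_fderiv_apply (hd i) (hdc i), fourierReal_fderiv_apply (ha.of_le one_le_two) hc]
    linear_combination 4 * π ^ 2 * ⟪ξ, e i⟫ ^ 2 * fourierReal a ξ * Complex.I_sq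
  rw [funext (laplacian_eq_sum_fderiv_fderiv ha e), fourierReal_sum _ fun i _ => hint i]
  simp only [hmode, ← Finset.sum_mul, ← Finset.mul_sum, ← hnorm, Complex.real_smul]
  push_cast
  ring

end Derivatives

section Moments

theorem integrable_mul_of_hasCompactSupport (ha : Continuous a) (hc : HasCompactSupport a)
    (hb : Continuous b) : Integrable fun x => a x * b x :=
  (ha.mul hb).integrable_of_hasCompactSupport hc.mul_right

theorem integral_sub_mul_sq_norm_le_re_fourierReal (ha : Continuous a) (hc : HasCompactSupport a)
    (ξ : E) :
    (∫ x, a x) - 2 * π ^ 2 * ‖ξ‖ ^ 2 * (∫ x, |a x| * ‖x‖ ^ 2) ≤ (fourierReal a ξ).re := by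
  have hint : Integrable a := ha.integrable_of_hasCompactSupport hc
  have hsecond : Integrable fun x => 2 * π ^ 2 * ‖ξ‖ ^ 2 * (|a x| * ‖x‖ ^ 2) :=
    (integrable_mul_of_hasCompactSupport ha.abs hc.abs (by fun_prop)).const_mul _
  rw [re_fourierReal hint, ← integral_const_mul, ← integral_sub hint hsecond]
  refine integral_mono (hint.sub hsecond)
    (integrable_mul_of_hasCompactSupport ha hc (by fun_prop)) fun x => ?_
  have hangle := sq_le_sq.2 ((abs_two_pi_mul_inner_le x ξ).trans (le_abs_self _))
  have hcos : 1 - cos (2 * π * ⟪x, ξ⟫) ≤ (2 * π * ‖ξ‖ * ‖x‖) ^ 2 / 2 := by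
    linarith [one_sub_sq_div_two_le_cos (x := 2 * π * ⟪x, ξ⟫)]
  have hdefect : a x * (1 - cos (2 * π * ⟪x, ξ⟫)) ≤ |a x| * ((2 * π * ‖ξ‖ * ‖x‖) ^ 2 / 2) :=
    mul_le_mul (le_abs_self _) hcos (sub_nonneg.2 (cos_le_one _)) (abs_nonneg _)
  calc a x - 2 * π ^ 2 * ‖ξ‖ ^ 2 * (|a x| * ‖x‖ ^ 2)
      = a x - |a x| * ((2 * π * ‖ξ‖ * ‖x‖) ^ 2 / 2) := by ring
    _ ≤ a x * cos (2 * π * ⟪x, ξ⟫) := by linarith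

theorem abs_im_fourierReal_le (ha : Continuous a) (hc : HasCompactSupport a) (ξ : E) :
    |(fourierReal a ξ).im| ≤ 2 * π * ‖ξ‖ * ∫ x, |a x| * ‖x‖ := by
  rw [im_fourierReal (ha.integrable_of_hasCompactSupport hc), abs_neg, ← integral_const_mul]
  refine abs_integral_le_integral_abs.trans (integral_mono
    (integrable_mul_of_hasCompactSupport ha hc (by fun_prop)).abs
    ((integrable_mul_of_hasCompactSupport ha.abs hc.abs continuous_norm).const_mul _) fun x => ?_)
  calc |a x * sin (2 * π * ⟪x, ξ⟫)| ≤ |a x| * (2 * π * ‖ξ‖ * ‖x‖) := by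
        rw [abs_mul]
        gcongr
        exact abs_sin_le_abs.trans (abs_two_pi_mul_inner_le x ξ)
    _ = 2 * π * ‖ξ‖ * (|a x| * ‖x‖) := by ring

theorem integral_mul_inner_eq_zero (ha : Integrable fun x => a x • x) (h0 : ∫ x, a x • x = 0)
    (ξ : E) : ∫ x, a x * ⟪x, ξ⟫ = 0 := by
  simpa only [real_inner_smul_right, real_inner_comm, h0, inner_zero_right] using
    integral_inner (𝕜 := ℝ) ha ξ

theorem abs_im_fourierReal_le_of_integral_smul_eq_zero (ha : Continuous a)
    (hc : HasCompactSupport a) (h0 : ∫ x, a x • x = 0) (ξ : E) :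
    |(fourierReal a ξ).im| ≤ (2 * π * ‖ξ‖) ^ 3 * ∫ x, |a x| * ‖x‖ ^ 3 := by
  have hsin : Integrable fun x => a x * sin (2 * π * ⟪x, ξ⟫) :=
    integrable_mul_of_hasCompactSupport ha hc (by fun_prop)
  have hlin : Integrable fun x => 2 * π * (a x * ⟪x, ξ⟫) :=
    (integrable_mul_of_hasCompactSupport ha hc (by fun_prop)).const_mul _
  have hcancel : (fourierReal a ξ).im =
      ∫ x, (2 * π * (a x * ⟪x, ξ⟫) - a x * sin (2 * π * ⟪x, ξ⟫)) := by
    rw [im_fourierReal (ha.integrable_of_hasCompactSupport hc), integral_sub hlin hsin,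
      integral_const_mul, integral_mul_inner_eq_zero
        ((ha.smul continuous_id).integrable_of_hasCompactSupport hc.smul_right) h0,
      mul_zero, zero_sub]
  rw [hcancel, ← integral_const_mul]
  refine abs_integral_le_integral_abs.trans (integral_mono (hlin.sub hsin).abs
    ((integrable_mul_of_hasCompactSupport ha.abs hc.abs (continuous_norm.pow 3)).const_mul _)
    fun x => ?_)
  calc |2 * π * (a x * ⟪x, ξ⟫) - a x * sin (2 * π * ⟪x, ξ⟫)|
      = |a x| * |2 * π * ⟪x, ξ⟫ - sin (2 * π * ⟪x, ξ⟫)| := by rw [← abs_mul]; ring_nf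
    _ ≤ |a x| * (2 * π * ‖ξ‖ * ‖x‖) ^ 3 := by
      gcongr
      have hcube := pow_le_pow_left₀ (abs_nonneg _) (abs_two_pi_mul_inner_le x ξ) 3
      have : 0 ≤ |2 * π * ⟪x, ξ⟫| ^ 3 := by positivity
      linarith [abs_sub_sin_le (2 * π * ⟪x, ξ⟫)]
    _ = (2 * π * ‖ξ‖) ^ 3 * (|a x| * ‖x‖ ^ 3) := by ring

end Moments

theorem integrable_norm_pow_mul_norm_fourierReal (ha : ContDiff ℝ ∞ a) (hc : HasCompactSupport a)
    (j : ℕ) : Integrable fun ξ => ‖ξ‖ ^ j * ‖fourierReal a ξ‖ := by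
  have hc' : HasCompactSupport fun x => (a x : ℂ) := hc.comp_left Complex.ofReal_zero
  have ha' : ContDiff ℝ ∞ fun x => (a x : ℂ) := Complex.ofRealCLM.contDiff.comp ha
  exact SchwartzMap.integrable_pow_mul volume (𝓕 (hc'.toSchwartzMap ha')) j

theorem integral_cos_mul_re_sub_sin_mul_im_fourierReal (ha : Continuous a) (hi : Integrable a)
    (hF : Integrable (fourierReal a)) (x : E) :
    Integrable (fun ξ => cos (2 * π * ⟪ξ, x⟫) * (fourierReal a ξ).re -
        sin (2 * π * ⟪ξ, x⟫) * (fourierReal a ξ).im) ∧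
      ∫ ξ, (cos (2 * π * ⟪ξ, x⟫) * (fourierReal a ξ).re -
        sin (2 * π * ⟪ξ, x⟫) * (fourierReal a ξ).im) = a x := by
  have hint : Integrable fun ξ =>
      Complex.exp ((2 * π * ⟪ξ, x⟫ : ℝ) * Complex.I) * fourierReal a ξ := by
    refine hF.mono ((Continuous.aestronglyMeasurable (by fun_prop)).mul hF.aestronglyMeasurable)
      (.of_forall fun ξ => ?_)
    rw [norm_mul, Complex.norm_exp_ofReal_mul_I, one_mul]
  have hinv : ∫ ξ, Complex.exp ((2 * π * ⟪ξ, x⟫ : ℝ) * Complex.I) * fourierReal a ξ = a x := by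
    have h := congrFun ((Complex.continuous_ofReal.comp ha).fourierInv_fourier_eq hi.ofReal hF) x
    rw [fourierInv_eq'] at h
    exact h
  have hre := integral_re hint
  have hint_re := hint.re
  rw [hinv] at hre
  simp only [RCLike.re_eq_complex_re, Complex.mul_re, Complex.exp_ofReal_mul_I_re,
    Complex.exp_ofReal_mul_I_im, Complex.ofReal_re] at hre hint_re
  exact ⟨hint_re, hre⟩

theorem integral_one_sub_cos_mul_re_add_sin_mul_im_fourierReal (ha : Continuous a)
    (hi : Integrable a) (hF : Integrable (fourierReal a)) (x : E) :
    Integrable (fun ξ => (1 - cos (2 * π * ⟪ξ, x⟫)) * (fourierReal a ξ).re +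
        sin (2 * π * ⟪ξ, x⟫) * (fourierReal a ξ).im) ∧
      ∫ ξ, ((1 - cos (2 * π * ⟪ξ, x⟫)) * (fourierReal a ξ).re +
        sin (2 * π * ⟪ξ, x⟫) * (fourierReal a ξ).im) = a 0 - a x := by
  obtain ⟨hint, heq⟩ := integral_cos_mul_re_sub_sin_mul_im_fourierReal ha hi hF x
  obtain ⟨hint₀, heq₀⟩ := integral_cos_mul_re_sub_sin_mul_im_fourierReal ha hi hF 0
  rw [← heq₀, ← heq, ← integral_sub hint₀ hint]
  refine ⟨(hint₀.sub hint).congr (.of_forall fun ξ => ?_),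
    integral_congr_ae (.of_forall fun ξ => ?_)⟩
  all_goals
    simp only [Pi.sub_apply, inner_zero_right, mul_zero, cos_zero, sin_zero]
    ring

end FourierReal

section Modes

variable {E : Type*} [NormedAddCommGroup E] [InnerProductSpace ℝ E] [FiniteDimensional ℝ E]
  {U : E × ℝ → ℝ} {f g : E → ℝ} {x ξ : E} {R t : ℝ}

theorem hasCompactSupport_laplacian (hf : HasCompactSupport f) : HasCompactSupport (Δ f) :=
  hf.mono' fun x hx => by_contra fun hx' => hx <| by
    have hzero : f =ᶠ[𝓝 x] fun _ => 0 := notMem_tsupport_iff_eventuallyEq.1 hx'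
    rw [(laplacian_congr_nhds hzero).eq_of_nhds, laplacian_const, Pi.zero_apply]

theorem laplacian_comp_add_right (f : E → ℝ) (m x : E) :
    Δ (fun y => f (y + m)) x = Δ f (x + m) := by
  simp only [laplacian_eq_iteratedFDeriv_stdOrthonormalBasis, iteratedFDeriv_comp_add_right]

namespace IsDampedWave

theorem comp_add_right (hU : IsDampedWave U f g) (m : E) :
    IsDampedWave (fun p => U (p.1 + m, p.2)) (fun x => f (x + m)) (fun x => g (x + m)) where
  contDiffOn := hU.contDiffOn.comp (f := fun p : E × ℝ => (p.1 + m, p.2))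
    (by fun_prop) fun _ hp => ⟨trivial, hp.2⟩
  eqn x t ht := by
    rw [laplacian_comp_add_right fun y => U (y, t)]
    exact hU.eqn (x + m) t ht
  init x := hU.init (x + m)
  deriv_init x := hU.deriv_init (x + m)

theorem exists_eq_zero_of_add_lt_norm (hU : IsDampedWave U f g) (hf : HasCompactSupport f)
    (hg : HasCompactSupport g) :
    ∃ R, ∀ t ≥ 0, ∀ x, R + t < ‖x‖ → U (x, t) = 0 ∧ timeDeriv U (x, t) = 0 := by
  obtain ⟨R, hR⟩ := (hf.isCompact.union hg.isCompact).isBounded.exists_norm_le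
  refine ⟨R, fun t ht x hx => hU.eq_zero_of_add_lt_norm (fun y hy => ?_) (fun y hy => ?_) ht hx⟩
  · exact image_eq_zero_of_notMem_tsupport fun h => hy.not_ge (hR y (.inl h))
  · exact image_eq_zero_of_notMem_tsupport fun h => hy.not_ge (hR y (.inr h))

theorem hasCompactSupport_slice (hU : IsDampedWave U f g) (hf : HasCompactSupport f)
    (hg : HasCompactSupport g) (ht : 0 ≤ t) :
    HasCompactSupport (fun x => U (x, t)) ∧ HasCompactSupport fun x => timeDeriv U (x, t) := by
  obtain ⟨R, hR⟩ := hU.exists_eq_zero_of_add_lt_norm hf hg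
  have hout (x : E) (hx : x ∉ closedBall 0 (R + t)) :=
    hR t ht x (not_le.1 (mt mem_closedBall_zero_iff.2 hx))
  exact ⟨.intro (isCompact_closedBall 0 (R + t)) fun x hx => (hout x hx).1,
    .intro (isCompact_closedBall 0 (R + t)) fun x hx => (hout x hx).2⟩

theorem continuous_slice (hU : IsDampedWave U f g) (ht : 0 ≤ t) : Continuous fun x => U (x, t) :=
  (contDiff_slice hU.contDiffOn ht).continuous

end IsDampedWave

variable [MeasurableSpace E] [BorelSpace E]

theorem continuousOn_fourierReal_slice (hU : ContinuousOn U (univ ×ˢ Ici 0))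
    (hzero : ∀ s ≥ 0, ∀ x, R + s < ‖x‖ → U (x, s) = 0) :
    ContinuousOn (fun s => fourierReal (fun x => U (x, s)) ξ) (Ici 0) := by
  intro s hs
  simp only [fourierReal_eq_integral]
  have hcont : ContinuousOn (fun s => ∫ x, Complex.exp ((-2 * π * ⟪x, ξ⟫_ℝ : ℝ) * Complex.I) *
      U (x, s)) (Icc 0 (s + 1)) := by
    refine continuousOn_integral_of_compact_support (isCompact_closedBall 0 (R + (s + 1))) ?_
      fun r x hr hx => ?_
    · refine .mul (Continuous.continuousOn (by fun_prop))
        (Complex.continuous_ofReal.comp_continuousOn (hU.comp (f := fun p : ℝ × E => (p.2, p.1))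
          (by fun_prop) fun p hp => ⟨trivial, hp.1.1⟩))
    · rw [mem_closedBall_zero_iff, not_le] at hx
      rw [hzero r hr.1 x (by linarith [hr.2]), Complex.ofReal_zero, mul_zero]
  exact (hcont s ⟨hs, by linarith⟩).mono_of_mem_nhdsWithin
    (inter_mem_nhdsWithin (Ici 0) (Iic_mem_nhds (lt_add_one s)))

theorem hasDerivAt_fourierReal_slice (hU : ContDiffOn ℝ 1 U (univ ×ˢ Ici 0))
    (hzero : ∀ s ≥ 0, ∀ x, R + s < ‖x‖ → U (x, s) = 0) (ht : 0 < t) :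
    HasDerivAt (fun s => fourierReal (fun x => U (x, s)) ξ)
      (fourierReal (fun x => timeDeriv U (x, t)) ξ) t := by
  have hmode {V : E × ℝ → ℝ} (hV : ContinuousOn V (univ ×ˢ Ici 0)) :
      ContinuousOn (fun p : E × ℝ =>
        Complex.exp ((-2 * π * ⟪p.1, ξ⟫_ℝ : ℝ) * Complex.I) * V p) (univ ×ˢ Ioo 0 (t + 1)) :=
    .mul (Continuous.continuousOn (by fun_prop)) (Complex.continuous_ofReal.comp_continuousOn
      (hV.mono (prod_mono_right fun s hs => hs.1.le)))
  simp only [fourierReal_eq_integral]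
  refine (hasDerivAt_integral_of_compact_support isOpen_Ioo
    (isCompact_closedBall (0 : E) (R + (t + 1))) (hmode hU.continuousOn)
    (hmode (contDiffOn_timeDeriv (m := 0) hU (by simp)).continuousOn)
    (fun x s hs => ?_) (fun x hx s hs => ?_) ⟨ht, lt_add_one t⟩).2
  · exact (hasDerivAt_timeDeriv (x := x) (hU.differentiableOn one_ne_zero)
      hs.1).ofReal_comp.const_mul (Complex.exp ((-2 * π * ⟪x, ξ⟫_ℝ : ℝ) * Complex.I))
  · rw [mem_closedBall_zero_iff, not_le] at hx
    rw [hzero s hs.1.le x (by linarith [hs.2]), Complex.ofReal_zero, mul_zero]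

namespace IsDampedWave

theorem fourierReal_timeDeriv_timeDeriv (hU : IsDampedWave U f g) (hf : HasCompactSupport f)
    (hg : HasCompactSupport g) (ht : 0 < t) :
    fourierReal (fun x => timeDeriv (timeDeriv U) (x, t)) ξ =
      -fourierReal (fun x => timeDeriv U (x, t)) ξ -
        (4 * π ^ 2 * ‖ξ‖ ^ 2) • fourierReal (fun x => U (x, t)) ξ := by
  have hslice := contDiff_slice hU.contDiffOn ht.le
  obtain ⟨hc, hc'⟩ := hU.hasCompactSupport_slice hf hg ht.le
  have hlaplacian : Integrable (Δ fun y => U (y, t)) :=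
    (continuous_laplacian hslice).integrable_of_hasCompactSupport (hasCompactSupport_laplacian hc)
  have hvelocity : Integrable fun x => timeDeriv U (x, t) :=
    (contDiff_slice hU.contDiffOn_timeDeriv ht.le).continuous.integrable_of_hasCompactSupport hc'
  have heqn (x) : timeDeriv (timeDeriv U) (x, t) =
      Δ (fun y => U (y, t)) x - timeDeriv U (x, t) := by linarith [hU.eqn x t ht]
  simp only [heqn]
  rw [fourierReal_sub hlaplacian hvelocity, fourierReal_laplacian hslice hc]
  ring

theorem isDampedOscillator_fourierReal (hU : IsDampedWave U f g) (hf : HasCompactSupport f)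
    (hg : HasCompactSupport g) (ξ : E) :
    IsDampedOscillator (4 * π ^ 2 * ‖ξ‖ ^ 2) (fun t => fourierReal (fun x => U (x, t)) ξ)
      (fun t => fourierReal (fun x => timeDeriv U (x, t)) ξ) := by
  obtain ⟨R, hR⟩ := hU.exists_eq_zero_of_add_lt_norm hf hg
  have hposition (s) (hs : s ≥ 0) (x) (hx : R + s < ‖x‖) := (hR s hs x hx).1
  have hvelocity (s) (hs : s ≥ 0) (x) (hx : R + s < ‖x‖) := (hR s hs x hx).2
  refine ⟨continuousOn_fourierReal_slice hU.contDiffOn.continuousOn hposition,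
    continuousOn_fourierReal_slice hU.contDiffOn_timeDeriv.continuousOn hvelocity,
    fun t ht => hasDerivAt_fourierReal_slice (hU.contDiffOn.of_le one_le_two) hposition ht,
    fun t ht => ?_⟩
  rw [← hU.fourierReal_timeDeriv_timeDeriv hf hg ht]
  exact hasDerivAt_fourierReal_slice hU.contDiffOn_timeDeriv hvelocity ht

end IsDampedWave

end Modes

section Gaussian

variable {E : Type*} [NormedAddCommGroup E] {b c : ℝ}

theorem norm_pow_mul_gaussian_le (hb : 0 < b) (k : ℕ) (v : E) :
    ‖v‖ ^ (2 * k) * exp (-b * ‖v‖ ^ 2) ≤ (2 / b) ^ k * k ! * exp (-(b / 2) * ‖v‖ ^ 2) := by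
  have hpow : ‖v‖ ^ (2 * k) ≤ (2 / b) ^ k * k ! * exp (b / 2 * ‖v‖ ^ 2) :=
    calc ‖v‖ ^ (2 * k) = (2 / b) ^ k * (b / 2 * ‖v‖ ^ 2) ^ k := by
          rw [← mul_pow, pow_mul]
          field_simp
      _ ≤ (2 / b) ^ k * (k ! * exp (b / 2 * ‖v‖ ^ 2)) := by
          gcongr
          exact (div_le_iff₀' (by positivity)).1
            (pow_div_factorial_le_exp (b / 2 * ‖v‖ ^ 2) (by positivity) k)
      _ = (2 / b) ^ k * k ! * exp (b / 2 * ‖v‖ ^ 2) := (mul_assoc _ _ _).symm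
  refine (mul_le_mul_of_nonneg_right hpow (exp_pos _).le).trans_eq ?_
  rw [mul_assoc, ← exp_add]
  ring_nf

variable [InnerProductSpace ℝ E] [FiniteDimensional ℝ E] [MeasurableSpace E] [BorelSpace E]

theorem integrable_gaussian (hb : 0 < b) : Integrable fun v : E => exp (-b * ‖v‖ ^ 2) := by
  refine (GaussianFourier.integrable_cexp_neg_mul_sq_norm_add (b := b) (by simpa) 0
    (0 : E)).norm.congr (.of_forall fun v => ?_)
  simp [Complex.norm_exp, ← Complex.ofReal_pow]

theorem integrable_norm_pow_mul_gaussian (hb : 0 < b) (j : ℕ) :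
    Integrable fun v : E => ‖v‖ ^ j * exp (-b * ‖v‖ ^ 2) := by
  refine ((integrable_gaussian hb).add ((integrable_gaussian (half_pos hb)).const_mul
    ((2 / b) ^ j * j !))).mono' (Continuous.aestronglyMeasurable (by fun_prop))
    (.of_forall fun v => ?_)
  rw [norm_of_nonneg (by positivity)]
  have hpow : ‖v‖ ^ j ≤ 1 + ‖v‖ ^ (2 * j) := by
    rw [mul_comm, pow_mul]
    nlinarith [sq_nonneg (‖v‖ ^ j - 1), sq_nonneg (‖v‖ ^ j)]
  calc ‖v‖ ^ j * exp (-b * ‖v‖ ^ 2) ≤ (1 + ‖v‖ ^ (2 * j)) * exp (-b * ‖v‖ ^ 2) := by gcongr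
    _ = exp (-b * ‖v‖ ^ 2) + ‖v‖ ^ (2 * j) * exp (-b * ‖v‖ ^ 2) := by ring
    _ ≤ _ := add_le_add_right (norm_pow_mul_gaussian_le hb j v) _

theorem integral_norm_pow_four_mul_gaussian_le (hb : 0 < b) :
    ∫ v : E, ‖v‖ ^ 4 * exp (-b * ‖v‖ ^ 2) ≤
      8 * 4 ^ (Module.finrank ℝ E / 2 : ℝ) / b ^ 2 * ∫ v : E, exp (-(2 * b) * ‖v‖ ^ 2) := by
  have hscale : ∫ v : E, exp (-(b / 2) * ‖v‖ ^ 2) =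
      4 ^ (Module.finrank ℝ E / 2 : ℝ) * ∫ v : E, exp (-(2 * b) * ‖v‖ ^ 2) := by
    rw [GaussianFourier.integral_rexp_neg_mul_sq_norm (half_pos hb),
      GaussianFourier.integral_rexp_neg_mul_sq_norm (by positivity),
      ← mul_rpow (by norm_num) (by positivity)]
    congr 1
    field_simp
    norm_num
  calc ∫ v : E, ‖v‖ ^ 4 * exp (-b * ‖v‖ ^ 2)
      ≤ ∫ v : E, (2 / b) ^ 2 * 2 ! * exp (-(b / 2) * ‖v‖ ^ 2) :=
        integral_mono (integrable_norm_pow_mul_gaussian hb 4)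
          ((integrable_gaussian (half_pos hb)).const_mul _) (norm_pow_mul_gaussian_le hb 2)
    _ = 8 * 4 ^ (Module.finrank ℝ E / 2 : ℝ) / b ^ 2 * ∫ v : E, exp (-(2 * b) * ‖v‖ ^ 2) := by
        rw [integral_const_mul, hscale, Nat.factorial_two]
        push_cast
        ring

theorem eventually_exp_neg_mul_mul_sq_le_integral_gaussian (hb : 0 < b) (hc : 0 < c) :
    ∀ᶠ t in atTop, exp (-c * t) * t ^ 2 ≤ ∫ v : E, exp (-(b * t) * ‖v‖ ^ 2) := by
  set d : ℝ := Module.finrank ℝ E / 2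
  have hlim := tendsto_rpow_mul_exp_neg_mul_atTop_nhds_zero (2 + d) c hc
  filter_upwards [hlim.eventually (ge_mem_nhds (rpow_pos_of_pos (div_pos pi_pos hb) d)),
    eventually_gt_atTop 0] with t hle ht
  have htd : 0 < t ^ d := rpow_pos_of_pos ht d
  rw [GaussianFourier.integral_rexp_neg_mul_sq_norm (mul_pos hb ht), ← div_div,
    div_rpow (by positivity) ht.le, le_div_iff₀ htd]
  calc exp (-c * t) * t ^ 2 * t ^ d = t ^ (2 + d) * exp (-c * t) := by
        rw [rpow_add ht, rpow_two]
        ring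
    _ ≤ (π / b) ^ d := hle

theorem integral_cos_mul_gaussian (hb : 0 < b) (x : E) :
    ∫ v : E, cos (2 * π * ⟪v, x⟫_ℝ) * exp (-b * ‖v‖ ^ 2) =
      (∫ v : E, exp (-b * ‖v‖ ^ 2)) * exp (-(π ^ 2 * ‖x‖ ^ 2 / b)) := by
  have hcast (v : E) : ((exp (-b * ‖v‖ ^ 2) : ℝ) : ℂ) = Complex.exp (-b * ‖v‖ ^ 2) := by
    push_cast
    rfl
  have hfourier : fourierReal (fun v : E => exp (-b * ‖v‖ ^ 2)) x =
      ((∫ v : E, exp (-b * ‖v‖ ^ 2)) * exp (-(π ^ 2 * ‖x‖ ^ 2 / b)) : ℝ) := by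
    simp only [fourierReal, hcast]
    rw [fourier_gaussian_innerProductSpace (by simpa),
      ← GaussianFourier.integral_cexp_neg_mul_sq_norm (by simpa)]
    simp only [← hcast, integral_complex_ofReal]
    push_cast
    rw [neg_mul, neg_div]
  have hre := congrArg Complex.re hfourier
  rw [re_fourierReal (integrable_gaussian hb), Complex.ofReal_re] at hre
  simpa only [mul_comm] using hre

theorem integrable_one_sub_cos_mul_gaussian (hb : 0 < b) (x : E) :
    Integrable fun v : E => (1 - cos (2 * π * ⟪v, x⟫_ℝ)) * exp (-b * ‖v‖ ^ 2) := by
  refine ((integrable_gaussian hb).const_mul 2).mono'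
    (Continuous.aestronglyMeasurable (by fun_prop)) (.of_forall fun v => ?_)
  rw [norm_of_nonneg (mul_nonneg (sub_nonneg.2 (cos_le_one _)) (exp_pos _).le)]
  gcongr
  linarith [neg_one_le_cos (2 * π * ⟪v, x⟫_ℝ)]

theorem integral_one_sub_cos_mul_gaussian (hb : 0 < b) (x : E) :
    ∫ v : E, (1 - cos (2 * π * ⟪v, x⟫_ℝ)) * exp (-b * ‖v‖ ^ 2) =
      (∫ v : E, exp (-b * ‖v‖ ^ 2)) * (1 - exp (-(π ^ 2 * ‖x‖ ^ 2 / b))) := by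
  have hgauss := integrable_gaussian (E := E) hb
  have hcos : Integrable fun v : E => cos (2 * π * ⟪v, x⟫_ℝ) * exp (-b * ‖v‖ ^ 2) := by
    refine hgauss.mono' (Continuous.aestronglyMeasurable (by fun_prop)) (.of_forall fun v => ?_)
    rw [norm_mul, norm_of_nonneg (exp_pos _).le]
    exact mul_le_of_le_one_left (exp_pos _).le (abs_cos_le_one _)
  simp only [sub_mul, one_mul]
  rw [integral_sub hgauss hcos, integral_cos_mul_gaussian hb, mul_sub, mul_one]

end Gaussian

section Localization

variable {E : Type*} [NormedAddCommGroup E] [InnerProductSpace ℝ E] [FiniteDimensional ℝ E]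
  [MeasurableSpace E] [BorelSpace E]

/-- At each time `t ≥ 1` the Fourier transform of `U (·, t)` has real part at least
`c₀ e^{-8π²t|ξ|²}` and imaginary part at most `B |ξ|³ e^{-4π²t|ξ|²}`, up to errors
`e^{-ct} D(ξ)`. The cubic vanishing at `ξ = 0` expresses that the centroid is the origin. -/
structure HasHeatSpectrum (U : E × ℝ → ℝ) (c₀ B c : ℝ) (D : E → ℝ) : Prop where
  lower_pos : 0 < c₀
  upper_nonneg : 0 ≤ B
  rate_pos : 0 < c
  error_nonneg : ∀ ξ, 0 ≤ D ξ
  integrable_error : Integrable fun ξ => ‖ξ‖ * D ξ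
  le_re : ∀ t ≥ 1, ∀ ξ, c₀ * exp (-(8 * π ^ 2 * t) * ‖ξ‖ ^ 2) - exp (-c * t) * D ξ ≤
    (fourierReal (fun x => U (x, t)) ξ).re
  abs_im_le : ∀ t ≥ 1, ∀ ξ, |(fourierReal (fun x => U (x, t)) ξ).im| ≤
    B * ‖ξ‖ ^ 3 * exp (-(4 * π ^ 2 * t) * ‖ξ‖ ^ 2) + exp (-c * t) * D ξ

theorem one_sub_cos_le_abs (z : ℝ) : 1 - cos z ≤ |z| := by
  rcases le_total |z| 2 with hz | hz
  · nlinarith [one_sub_sq_div_two_le_cos (x := z), sq_abs z, abs_nonneg z]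
  · linarith [neg_one_le_cos z]

theorem sub_le_one_sub_cos_mul_add_sin_mul {z k a b η p q : ℝ} (hη : 0 ≤ η) (hz : |z| ≤ k)
    (hp : a - η ≤ p) (hq : |q| ≤ b + η) :
    (1 - cos z) * a - k * (b + 2 * η) ≤ (1 - cos z) * p + sin z * q := by
  have hcos : 0 ≤ 1 - cos z := sub_nonneg.2 (cos_le_one z)
  have hre : (1 - cos z) * a - k * η ≤ (1 - cos z) * p := by
    nlinarith [mul_le_mul_of_nonneg_left hp hcos,
      mul_le_mul_of_nonneg_right ((one_sub_cos_le_abs z).trans hz) hη]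
  have him : -(k * (b + η)) ≤ sin z * q := by
    refine (abs_le.1 ?_).1
    rw [abs_mul]
    exact mul_le_mul (abs_sin_le_abs.trans hz) hq (abs_nonneg q) ((abs_nonneg z).trans hz)
  linarith

theorem mul_integral_gaussian_mul_le_of_hotSpot {a D : E → ℝ} {b c₀ B η : ℝ} {x : E}
    (ha : Continuous a) (hi : Integrable a) (hF : Integrable (fourierReal a)) (hb : 0 < b)
    (hη : 0 ≤ η) (hD : ∀ ξ, 0 ≤ D ξ) (hDi : Integrable fun ξ => ‖ξ‖ * D ξ)
    (hre : ∀ ξ, c₀ * exp (-(2 * b) * ‖ξ‖ ^ 2) - η * D ξ ≤ (fourierReal a ξ).re)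
    (him : ∀ ξ, |(fourierReal a ξ).im| ≤ B * ‖ξ‖ ^ 3 * exp (-b * ‖ξ‖ ^ 2) + η * D ξ)
    (hx : a 0 ≤ a x) :
    c₀ * ((∫ ξ : E, exp (-(2 * b) * ‖ξ‖ ^ 2)) * (1 - exp (-(π ^ 2 * ‖x‖ ^ 2 / (2 * b))))) ≤
      2 * π * ‖x‖ * (B * (∫ ξ : E, ‖ξ‖ ^ 4 * exp (-b * ‖ξ‖ ^ 2)) +
        2 * η * ∫ ξ, ‖ξ‖ * D ξ) := by
  have hb2 : 0 < 2 * b := by positivity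
  obtain ⟨hint, hinv⟩ := integral_one_sub_cos_mul_re_add_sin_mul_im_fourierReal ha hi hF x
  have hmain := (integrable_one_sub_cos_mul_gaussian hb2 x).const_mul c₀
  have himag := (integrable_norm_pow_mul_gaussian (E := E) hb 4).const_mul B
  have herr := hDi.const_mul (2 * η)
  have hpoint (ξ : E) :
      c₀ * ((1 - cos (2 * π * ⟪ξ, x⟫_ℝ)) * exp (-(2 * b) * ‖ξ‖ ^ 2)) -
        2 * π * ‖x‖ * (B * (‖ξ‖ ^ 4 * exp (-b * ‖ξ‖ ^ 2)) + 2 * η * (‖ξ‖ * D ξ)) ≤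
      (1 - cos (2 * π * ⟪ξ, x⟫_ℝ)) * (fourierReal a ξ).re +
        sin (2 * π * ⟪ξ, x⟫_ℝ) * (fourierReal a ξ).im := by
    refine le_of_eq_of_le ?_ (sub_le_one_sub_cos_mul_add_sin_mul (mul_nonneg hη (hD ξ))
      (abs_two_pi_mul_inner_le ξ x) (hre ξ) (him ξ))
    ring
  have herrs : Integrable fun ξ : E => 2 * π * ‖x‖ *
      (B * (‖ξ‖ ^ 4 * exp (-b * ‖ξ‖ ^ 2)) + 2 * η * (‖ξ‖ * D ξ)) :=
    (himag.add herr).const_mul _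
  have hle := (integral_sub hmain herrs).symm.trans_le
    (integral_mono (hmain.sub herrs) hint hpoint)
  rw [hinv, integral_const_mul, integral_one_sub_cos_mul_gaussian hb2, integral_const_mul,
    integral_add himag herr, integral_const_mul, integral_const_mul] at hle
  linarith

theorem le_div_of_one_sub_exp_le {A r t : ℝ} (hr : 0 ≤ r) (hA : 0 ≤ A) (ht : 0 < t)
    (hAt : 4 * A ≤ t) (hrt : r ≤ 2 * t) (h : 1 - exp (-(r ^ 2 / (8 * t))) ≤ A * r / t ^ 2) :
    r ≤ 16 * A / t := by
  rcases hr.eq_or_lt with rfl | hr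
  · positivity
  have hexp : exp (-(r ^ 2 / (8 * t))) ≤ (r ^ 2 / (8 * t) + 1)⁻¹ := by
    rw [exp_neg]
    gcongr
    exact add_one_le_exp _
  have hfrac : r ^ 2 / (8 * t + r ^ 2) ≤ A * r / t ^ 2 :=
    calc r ^ 2 / (8 * t + r ^ 2) = 1 - (r ^ 2 / (8 * t) + 1)⁻¹ := by
          field_simp
          ring
      _ ≤ 1 - exp (-(r ^ 2 / (8 * t))) := sub_le_sub_left hexp 1
      _ ≤ A * r / t ^ 2 := h
  rw [div_le_div_iff₀ (by positivity) (by positivity)] at hfrac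
  have hlin : r * t ^ 2 ≤ A * (8 * t + r ^ 2) :=
    le_of_mul_le_mul_left (by linarith) hr
  have hquad : r * t * t ≤ 16 * A * t := by
    nlinarith [mul_le_mul_of_nonneg_left hrt (mul_nonneg hA hr.le),
      mul_le_mul_of_nonneg_left hAt (mul_nonneg hr.le ht.le)]
  exact (le_div_iff₀ ht).2 (le_of_mul_le_mul_right hquad ht)

theorem le_mul_div_of_spectral_le {c₀ B P Q I G η t r y : ℝ} (hc₀ : 0 < c₀) (hB : 0 ≤ B)
    (hQ : 0 ≤ Q) (ht : 0 < t) (hG : 0 < G) (hr : 0 ≤ r)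
    (hspectral : c₀ * (G * y) ≤ 2 * π * r * (B * I + 2 * η * Q))
    (hfour : I ≤ P / t ^ 2 * G) (hsmall : η * t ^ 2 ≤ G) :
    y ≤ (2 * π * (B * P + 2 * Q) / c₀ + 1) * r / t ^ 2 := by
  have hη : η ≤ G / t ^ 2 := (le_div_iff₀ (by positivity)).2 hsmall
  have hscaled : c₀ * G * y ≤ c₀ * G * (2 * π * (B * P + 2 * Q) / c₀ * r / t ^ 2) :=
    calc c₀ * G * y = c₀ * (G * y) := mul_assoc _ _ _
      _ ≤ 2 * π * r * (B * I + 2 * η * Q) := hspectral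
      _ ≤ 2 * π * r * (B * (P / t ^ 2 * G) + 2 * (G / t ^ 2) * Q) := by gcongr
      _ = c₀ * G * (2 * π * (B * P + 2 * Q) / c₀ * r / t ^ 2) := by
        field_simp
  refine (le_of_mul_le_mul_left hscaled (by positivity)).trans ?_
  gcongr
  linarith

namespace HasHeatSpectrum

variable {U : E × ℝ → ℝ} {c₀ B c : ℝ} {D : E → ℝ}

theorem eventually_integral_pos (hU : HasHeatSpectrum U c₀ B c D)
    (hi : ∀ t ≥ 1, Integrable fun x => U (x, t)) : ∀ᶠ t in atTop, 0 < ∫ x, U (x, t) := by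
  have hlim : Tendsto (fun t => exp (-c * t) * D 0) atTop (𝓝 0) := by
    simpa using (tendsto_exp_atBot.comp
      (tendsto_id.const_mul_atTop_of_neg (neg_neg_iff_pos.2 hU.rate_pos))).mul_const (D 0)
  filter_upwards [hlim.eventually_lt_const hU.lower_pos, eventually_ge_atTop 1] with t hsmall ht
  have hmass : (fourierReal (fun x => U (x, t)) 0).re = ∫ x, U (x, t) := by
    simp only [re_fourierReal (hi t ht), inner_zero_right, mul_zero, cos_zero, mul_one]
  have hre := hU.le_re t ht 0
  rw [hmass, norm_zero, zero_pow two_ne_zero, mul_zero, exp_zero, mul_one] at hre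
  linarith

theorem exists_one_sub_exp_le (hU : HasHeatSpectrum U c₀ B c D)
    (hcont : ∀ t ≥ 1, Continuous fun x => U (x, t))
    (hi : ∀ t ≥ 1, Integrable fun x => U (x, t))
    (hF : ∀ t ≥ 1, Integrable (fourierReal fun x => U (x, t))) :
    ∃ A > 0, ∀ᶠ t in atTop, ∀ x, U (0, t) ≤ U (x, t) →
      1 - exp (-(‖x‖ ^ 2 / (8 * t))) ≤ A * ‖x‖ / t ^ 2 := by
  set P : ℝ := 8 * 4 ^ (Module.finrank ℝ E / 2 : ℝ) / (4 * π ^ 2) ^ 2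
  set Q : ℝ := ∫ ξ, ‖ξ‖ * D ξ
  have hQ : 0 ≤ Q := integral_nonneg fun ξ => mul_nonneg (norm_nonneg ξ) (hU.error_nonneg ξ)
  have hc₀ := hU.lower_pos
  have hB := hU.upper_nonneg
  refine ⟨2 * π * (B * P + 2 * Q) / c₀ + 1, by positivity, ?_⟩
  filter_upwards [eventually_exp_neg_mul_mul_sq_le_integral_gaussian (E := E)
    (b := 8 * π ^ 2) (by positivity) hU.rate_pos, eventually_ge_atTop 1] with t hsmall ht x hx
  have ht0 : 0 < t := one_pos.trans_le ht
  set G : ℝ := ∫ ξ : E, exp (-(8 * π ^ 2 * t) * ‖ξ‖ ^ 2)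
  have hG : 0 < G := (mul_pos (exp_pos _) (pow_pos ht0 2)).trans_le hsmall
  have hdouble : 2 * (4 * π ^ 2 * t) = 8 * π ^ 2 * t := by ring
  have hspectral := mul_integral_gaussian_mul_le_of_hotSpot (b := 4 * π ^ 2 * t) (hcont t ht)
    (hi t ht) (hF t ht) (by positivity) (exp_pos (-c * t)).le hU.error_nonneg
    hU.integrable_error (by simpa only [hdouble] using hU.le_re t ht) (hU.abs_im_le t ht) hx
  have hfour := integral_norm_pow_four_mul_gaussian_le (E := E) (b := 4 * π ^ 2 * t) (by positivity)
  have hangle : π ^ 2 * ‖x‖ ^ 2 / (8 * π ^ 2 * t) = ‖x‖ ^ 2 / (8 * t) := by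
    field_simp
  rw [hdouble, hangle] at hspectral
  rw [hdouble, mul_pow, ← div_div] at hfour
  exact le_mul_div_of_spectral_le hc₀ hB hQ ht0 hG (norm_nonneg x) hspectral hfour hsmall

theorem eventually_norm_le (hU : HasHeatSpectrum U c₀ B c D) {R : ℝ}
    (hcont : ∀ t ≥ 1, Continuous fun x => U (x, t))
    (hi : ∀ t ≥ 1, Integrable fun x => U (x, t))
    (hF : ∀ t ≥ 1, Integrable (fourierReal fun x => U (x, t)))
    (hzero : ∀ t ≥ 1, ∀ x, R + t < ‖x‖ → U (x, t) = 0) :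
    ∃ C > 0, ∀ᶠ t in atTop, ∀ x, (∀ y, U (y, t) ≤ U (x, t)) → ‖x‖ ≤ C / t := by
  obtain ⟨A, hA, hdecay⟩ := hU.exists_one_sub_exp_le hcont hi hF
  refine ⟨16 * A, by positivity, ?_⟩
  filter_upwards [hdecay, hU.eventually_integral_pos hi, eventually_ge_atTop 1,
    eventually_ge_atTop R, eventually_ge_atTop (4 * A)] with t hdecay hmass ht hRt hAt x hx
  have hcone : ‖x‖ ≤ R + t := by
    by_contra! hout
    refine hmass.not_ge (integral_nonpos fun y => ?_)
    exact (hx y).trans_eq (hzero t ht x hout)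
  exact le_div_of_one_sub_exp_le (norm_nonneg x) hA.le (one_pos.trans_le ht) hAt (by linarith)
    (hdecay x (hx 0))

end HasHeatSpectrum

end Localization

section Centroid

open scoped ContDiff

variable {E : Type*} [NormedAddCommGroup E] [InnerProductSpace ℝ E] [FiniteDimensional ℝ E]
  [MeasurableSpace E] [BorelSpace E] {U : E × ℝ → ℝ} {f g : E → ℝ}

/-- The size `|ĝ| + (1 + ρ) |f̂| + e^{-ρ}`, where `ρ = 4π²|ξ|²`, of the initial data at frequency
`ξ`. The Gaussian makes it bounded below on bounded sets of frequencies. -/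
def dataMajorant (f g : E → ℝ) (ξ : E) : ℝ :=
  ‖fourierReal g ξ‖ + (1 + 4 * π ^ 2 * ‖ξ‖ ^ 2) * ‖fourierReal f ξ‖ +
    exp (-(4 * π ^ 2 * ‖ξ‖ ^ 2))

theorem dataMajorant_nonneg (f g : E → ℝ) (ξ : E) : 0 ≤ dataMajorant f g ξ := by
  unfold dataMajorant
  positivity

theorem integrable_norm_pow_mul_dataMajorant (hf : ContDiff ℝ ∞ f) (hfc : HasCompactSupport f)
    (hg : ContDiff ℝ ∞ g) (hgc : HasCompactSupport g) (j : ℕ) :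
    Integrable fun ξ => ‖ξ‖ ^ j * dataMajorant f g ξ := by
  have hposition := (integrable_norm_pow_mul_norm_fourierReal hf hfc j).add
    ((integrable_norm_pow_mul_norm_fourierReal hf hfc (j + 2)).const_mul (4 * π ^ 2))
  have hvelocity := integrable_norm_pow_mul_norm_fourierReal hg hgc j
  have hgauss := integrable_norm_pow_mul_gaussian (E := E) (b := 4 * π ^ 2) (by positivity) j
  refine ((hvelocity.add hposition).add hgauss).congr (.of_forall fun ξ => ?_)
  simp only [Pi.add_apply, dataMajorant, neg_mul]
  ring

theorem exists_frequency_threshold {M m L : ℝ} (hM : 0 < M) (hm : 0 ≤ m) (hL : 0 ≤ L) :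
    ∃ θ ∈ Ioc (0 : ℝ) (3 / 16), θ * m ≤ M ∧ 8 * (θ * L) ≤ M := by
  refine ⟨min (3 / 16) (M / (m + 8 * L + 1)), ⟨by positivity, min_le_left _ _⟩, ?_⟩
  have hθ := (le_div_iff₀ (by positivity)).1 (min_le_right (3 / 16) (M / (m + 8 * L + 1)))
  have hθ0 : 0 < min (3 / 16) (M / (m + 8 * L + 1)) := by positivity
  constructor <;> nlinarith [mul_nonneg hθ0.le hm, mul_nonneg hθ0.le hL]

namespace IsDampedWave

theorem norm_fourierReal_slice_le (hU : IsDampedWave U f g) (hfc : HasCompactSupport f)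
    (hgc : HasCompactSupport g) {t : ℝ} (ht : 0 ≤ t) (ξ : E) :
    ‖fourierReal (fun x => U (x, t)) ξ‖ ≤
      (16 + exp (1 / 8) * ∫ x, |U (x, t)|) * dataMajorant f g ξ := by
  have hmass : 0 ≤ ∫ x, |U (x, t)| := integral_nonneg fun x => abs_nonneg _
  rcases le_total (1 / 8) (4 * π ^ 2 * ‖ξ‖ ^ 2) with hfast | hslow
  · have hdecay := (hU.isDampedOscillator_fourierReal hfc hgc ξ).norm_position_le_exp_mul
      ⟨by norm_num, by norm_num⟩ hfast ht
    simp only [hU.init, hU.deriv_init] at hdecay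
    have hexp : exp (-(1 / 8 / 4) * t) ≤ 1 := exp_le_one_iff.2 (by linarith)
    have hdata : ‖fourierReal g ξ‖ + (1 + 4 * π ^ 2 * ‖ξ‖ ^ 2) * ‖fourierReal f ξ‖ ≤
        dataMajorant f g ξ := le_add_of_nonneg_right (exp_pos _).le
    calc ‖fourierReal (fun x => U (x, t)) ξ‖ ≤ 2 / (1 / 8) * exp (-(1 / 8 / 4) * t) *
          (‖fourierReal g ξ‖ + (1 + 4 * π ^ 2 * ‖ξ‖ ^ 2) * ‖fourierReal f ξ‖) := hdecay
      _ ≤ 2 / (1 / 8) * 1 * dataMajorant f g ξ := by gcongr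
      _ ≤ (16 + exp (1 / 8) * ∫ x, |U (x, t)|) * dataMajorant f g ξ := by
        refine mul_le_mul_of_nonneg_right ?_ (dataMajorant_nonneg f g ξ)
        linarith [mul_nonneg (exp_pos (1 / 8)).le hmass]
  · have hgauss : exp (-(1 / 8)) ≤ dataMajorant f g ξ :=
      (exp_le_exp.2 (neg_le_neg hslow)).trans (le_add_of_nonneg_left (by positivity))
    calc ‖fourierReal (fun x => U (x, t)) ξ‖ ≤ ∫ x, |U (x, t)| := norm_fourierReal_le _ ξ
      _ = exp (1 / 8) * (∫ x, |U (x, t)|) * exp (-(1 / 8)) := by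
        rw [mul_right_comm, ← exp_add, add_neg_cancel, exp_zero, one_mul]
      _ ≤ (16 + exp (1 / 8) * ∫ x, |U (x, t)|) * dataMajorant f g ξ := by
        gcongr
        linarith

theorem integrable_slice (hU : IsDampedWave U f g) (hfc : HasCompactSupport f)
    (hgc : HasCompactSupport g) {t : ℝ} (ht : 0 ≤ t) : Integrable fun x => U (x, t) :=
  (hU.continuous_slice ht).integrable_of_hasCompactSupport
    (hU.hasCompactSupport_slice hfc hgc ht).1

theorem integrable_fourierReal_slice (hU : IsDampedWave U f g) (hf : ContDiff ℝ ∞ f)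
    (hfc : HasCompactSupport f) (hg : ContDiff ℝ ∞ g) (hgc : HasCompactSupport g) {t : ℝ}
    (ht : 0 ≤ t) : Integrable (fourierReal fun x => U (x, t)) := by
  have hmajorant : Integrable (dataMajorant f g) := by
    simpa only [pow_zero, one_mul] using integrable_norm_pow_mul_dataMajorant hf hfc hg hgc 0
  exact (hmajorant.const_mul _).mono'
    (continuous_fourierReal (hU.integrable_slice hfc hgc ht)).aestronglyMeasurable
    (.of_forall (hU.norm_fourierReal_slice_le hfc hgc ht))

theorem le_re_fourierReal_slice (hU : IsDampedWave U f g) (hf : Continuous f)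
    (hfc : HasCompactSupport f) (hg : Continuous g) (hgc : HasCompactSupport g) {t θ : ℝ}
    (hθ : θ ∈ Ioc 0 (3 / 16)) (hM : 0 ≤ ∫ x, (f x + g x))
    (hm : θ * (∫ x, |f x + g x| * ‖x‖ ^ 2) ≤ ∫ x, (f x + g x))
    (hL : 8 * (θ * ∫ x, |f x|) ≤ ∫ x, (f x + g x)) (ht : 1 ≤ t) (ξ : E) :
    (∫ x, (f x + g x)) / 4 * exp (-(8 * π ^ 2 * t) * ‖ξ‖ ^ 2) - exp (-(θ / 4) * t) *
      ((2 + 2 / θ + ∫ x, (f x + g x)) * dataMajorant f g ξ) ≤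
      (fourierReal (fun x => U (x, t)) ξ).re := by
  have hmode := (hU.isDampedOscillator_fourierReal hfc hgc ξ).le_re_position
    (by positivity) hM hθ (fun hρ => ?_) (fun hρ => ?_) ht
  · simp only [hU.init, hU.deriv_init] at hmode
    rwa [show -(2 * (4 * π ^ 2 * ‖ξ‖ ^ 2)) * t = -(8 * π ^ 2 * t) * ‖ξ‖ ^ 2 by ring] at hmode
  · have hm0 : 0 ≤ ∫ x, |f x + g x| * ‖x‖ ^ 2 := integral_nonneg fun x => by positivity
    simp only [hU.init, hU.deriv_init]
    rw [add_comm, ← fourierReal_add (hf.integrable_of_hasCompactSupport hfc)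
      (hg.integrable_of_hasCompactSupport hgc)]
    linarith [integral_sub_mul_sq_norm_le_re_fourierReal (a := fun x => f x + g x) (hf.add hg)
      (hfc.add hgc) ξ, mul_le_mul_of_nonneg_right hρ hm0]
  · simp only [hU.init]
    linarith [mul_le_mul hρ (norm_fourierReal_le f ξ) (norm_nonneg _) hθ.1.le]

theorem abs_im_fourierReal_slice_le (hU : IsDampedWave U f g) (hf : Continuous f)
    (hfc : HasCompactSupport f) (hg : Continuous g) (hgc : HasCompactSupport g) {t θ : ℝ}
    (hθ : θ ∈ Ioc 0 (3 / 16)) (hM : 0 ≤ ∫ x, (f x + g x))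
    (hcentroid : ∫ x, (f x + g x) • x = 0) (ht : 1 ≤ t) (ξ : E) :
    |(fourierReal (fun x => U (x, t)) ξ).im| ≤
      2 * (2 * π) ^ 3 * ((∫ x, |f x + g x| * ‖x‖ ^ 3) + 2 * ∫ x, |f x| * ‖x‖) * ‖ξ‖ ^ 3 *
        exp (-(4 * π ^ 2 * t) * ‖ξ‖ ^ 2) +
      exp (-(θ / 4) * t) * ((2 + 2 / θ + ∫ x, (f x + g x)) * dataMajorant f g ξ) := by
  have hmode := (hU.isDampedOscillator_fourierReal hfc hgc ξ).abs_im_position_le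
    (by positivity) hM hθ ht
  simp only [hU.init, hU.deriv_init] at hmode
  rw [add_comm (fourierReal g ξ), ← fourierReal_add (hf.integrable_of_hasCompactSupport hfc)
    (hg.integrable_of_hasCompactSupport hgc)] at hmode
  refine hmode.trans (add_le_add_left ?_ _)
  have hcubic := abs_im_fourierReal_le_of_integral_smul_eq_zero (hf.add hg) (hfc.add hgc)
    hcentroid ξ
  have hlinear := abs_im_fourierReal_le hf hfc ξ
  calc 2 * exp (-(4 * π ^ 2 * ‖ξ‖ ^ 2) * t) * (|(fourierReal (fun x => f x + g x) ξ).im| +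
        2 * (4 * π ^ 2 * ‖ξ‖ ^ 2) * |(fourierReal f ξ).im|)
      ≤ 2 * exp (-(4 * π ^ 2 * ‖ξ‖ ^ 2) * t) * ((2 * π * ‖ξ‖) ^ 3 *
          (∫ x, |f x + g x| * ‖x‖ ^ 3) +
        2 * (4 * π ^ 2 * ‖ξ‖ ^ 2) * (2 * π * ‖ξ‖ * ∫ x, |f x| * ‖x‖)) := by gcongr; exact hcubic
    _ = _ := by
      rw [show -(4 * π ^ 2 * ‖ξ‖ ^ 2) * t = -(4 * π ^ 2 * t) * ‖ξ‖ ^ 2 by ring]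
      ring

theorem exists_hasHeatSpectrum (hU : IsDampedWave U f g) (hf : ContDiff ℝ ∞ f)
    (hfc : HasCompactSupport f) (hg : ContDiff ℝ ∞ g) (hgc : HasCompactSupport g)
    (hmass : 0 < ∫ x, (f x + g x)) (hcentroid : ∫ x, (f x + g x) • x = 0) :
    ∃ c₀ B c D, HasHeatSpectrum U c₀ B c D := by
  obtain ⟨θ, hθ, hm, hL⟩ := exists_frequency_threshold hmass
    (integral_nonneg fun x => by positivity : 0 ≤ ∫ x, |f x + g x| * ‖x‖ ^ 2)
    (integral_nonneg fun x => abs_nonneg (f x))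
  have hθ0 := hθ.1
  exact ⟨_, _, θ / 4, fun ξ => (2 + 2 / θ + ∫ x, (f x + g x)) * dataMajorant f g ξ,
    { lower_pos := by positivity
      upper_nonneg := by positivity
      rate_pos := by positivity
      error_nonneg := fun ξ => mul_nonneg (by positivity) (dataMajorant_nonneg f g ξ)
      integrable_error :=
        ((integrable_norm_pow_mul_dataMajorant hf hfc hg hgc 1).const_mul _).congr
          (.of_forall fun ξ => by simp only [pow_one]; exact mul_left_comm _ _ _)
      le_re := fun t ht => hU.le_re_fourierReal_slice hf.continuous hfc hg.continuous hgc hθ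
        hmass.le hm hL ht
      abs_im_le := fun t ht => hU.abs_im_fourierReal_slice_le hf.continuous hfc hg.continuous hgc
        hθ hmass.le hcentroid ht }⟩

theorem eventually_norm_le (hU : IsDampedWave U f g) (hf : ContDiff ℝ ∞ f)
    (hfc : HasCompactSupport f) (hg : ContDiff ℝ ∞ g) (hgc : HasCompactSupport g)
    (hmass : 0 < ∫ x, (f x + g x)) (hcentroid : ∫ x, (f x + g x) • x = 0) :
    ∃ C > 0, ∀ᶠ t in atTop, ∀ x, (∀ y, U (y, t) ≤ U (x, t)) → ‖x‖ ≤ C / t := by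
  obtain ⟨c₀, B, c, D, hspectrum⟩ := hU.exists_hasHeatSpectrum hf hfc hg hgc hmass hcentroid
  obtain ⟨R, hR⟩ := hU.exists_eq_zero_of_add_lt_norm hfc hgc
  have hnonneg {t : ℝ} (ht : t ≥ 1) : 0 ≤ t := zero_le_one.trans ht
  exact hspectrum.eventually_norm_le (fun t ht => hU.continuous_slice (hnonneg ht))
    (fun t ht => hU.integrable_slice hfc hgc (hnonneg ht))
    (fun t ht => hU.integrable_fourierReal_slice hf hfc hg hgc (hnonneg ht))
    fun t ht x hx => (hR t (hnonneg ht) x hx).1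

end IsDampedWave

theorem integral_smul_translate_centroid {h : E → ℝ} (hc : Continuous h)
    (hs : HasCompactSupport h) (hM : ∫ x, h x ≠ 0) :
    ∫ x, h (x + (∫ y, h y)⁻¹ • ∫ y, h y • y) • x = 0 := by
  set m : E := (∫ y, h y)⁻¹ • ∫ y, h y • y with hm
  have hmoment : Integrable fun x => h x • x :=
    (hc.smul continuous_id).integrable_of_hasCompactSupport hs.smul_right
  have hconst : Integrable fun x => h x • m :=
    (hc.integrable_of_hasCompactSupport hs).smul_const m
  calc ∫ x, h (x + m) • x = ∫ x, h (x + m) • (x + m - m) := by simp only [add_sub_cancel_right]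
    _ = ∫ y, h y • (y - m) := integral_add_right_eq_self (fun y => h y • (y - m)) m
    _ = (∫ y, h y • y) - (∫ y, h y) • m := by
      simp only [smul_sub]
      rw [integral_sub hmoment hconst, integral_smul_const]
    _ = 0 := by rw [hm, smul_inv_smul₀ hM, sub_self]

theorem hot_spots_converge_to_centroid_general (hU : IsDampedWave U f g) (hf : ContDiff ℝ ∞ f)
    (hfc : HasCompactSupport f) (hg : ContDiff ℝ ∞ g) (hgc : HasCompactSupport g)
    (hmass : 0 < ∫ x, (f x + g x)) :
    ∃ C > 0, ∃ T > 0, ∀ t ≥ T, ∀ x, (∀ y, U (y, t) ≤ U (x, t)) →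
      ‖x - (∫ y, (f y + g y))⁻¹ • ∫ y, (f y + g y) • y‖ ≤ C / t := by
  set m : E := (∫ y, (f y + g y))⁻¹ • ∫ y, (f y + g y) • y
  have hshift : ContDiff ℝ ∞ fun x : E => x + m := contDiff_id.add contDiff_const
  obtain ⟨C, hC, hevent⟩ := (hU.comp_add_right m).eventually_norm_le (hf.comp hshift)
    (hfc.comp_homeomorph (.addRight m)) (hg.comp hshift) (hgc.comp_homeomorph (.addRight m))
    (by rwa [integral_add_right_eq_self (fun x => f x + g x) m])
    (integral_smul_translate_centroid (hf.continuous.add hg.continuous) (hfc.add hgc) hmass.ne')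
  obtain ⟨T, hT⟩ := eventually_atTop.1 hevent
  refine ⟨C, hC, max T 1, by positivity, fun t ht x hx => ?_⟩
  refine hT t ((le_max_left T 1).trans ht) (x - m) fun y => ?_
  simpa only [sub_add_cancel] using hx (y + m)

end Centroid

theorem iteratedDeriv_two_comp_line {E : Type*} [NormedAddCommGroup E] [NormedSpace ℝ E]
    {v : E → ℝ} (hv : ContDiff ℝ 2 v) (x e : E) :
    iteratedDeriv 2 (fun a : ℝ => v (x + a • e)) 0 =
      fderiv ℝ (fun z => fderiv ℝ v z e) x e := by
  have hline (a : ℝ) : HasDerivAt (fun b : ℝ => x + b • e) e a := by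
    simpa only [id_eq, one_smul] using ((hasDerivAt_id a).smul_const e).const_add x
  have hfirst : deriv (fun a : ℝ => v (x + a • e)) = fun a => fderiv ℝ v (x + a • e) e :=
    funext fun a => ((hv.differentiable two_ne_zero _).hasFDerivAt.comp_hasDerivAt a
      (hline a)).deriv
  have hsecond : DifferentiableAt ℝ (fun z => fderiv ℝ v z e) (x + (0 : ℝ) • e) :=
    ((hv.fderiv_right (m := 1) le_rfl).clm_apply contDiff_const).differentiable one_ne_zero _
  rw [iteratedDeriv_succ, iteratedDeriv_one, hfirst]
  simpa only [zero_smul, add_zero, Function.comp_def] using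
    (hsecond.hasFDerivAt.comp_hasDerivAt (0 : ℝ) (hline 0)).deriv

theorem laplacian_eq_lap {v : EuclideanSpace ℝ (Fin n) → ℝ} (hv : ContDiff ℝ 2 v)
    (x : EuclideanSpace ℝ (Fin n)) : Δ v x = lap v x := by
  simp only [laplacian_eq_sum_fderiv_fderiv hv (EuclideanSpace.basisFun (Fin n) ℝ), lap,
    iteratedDeriv_two_comp_line hv, EuclideanSpace.basisFun_apply]

theorem isDampedWave_of_forall_deriv {f g : EuclideanSpace ℝ (Fin n) → ℝ}
    {U : EuclideanSpace ℝ (Fin n) × ℝ → ℝ} (hreg : ContDiffOn ℝ 2 U (univ ×ˢ Ici 0))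
    (hpde : ∀ x, ∀ t > (0 : ℝ), deriv (deriv fun s => U (x, s)) t - lap (fun z => U (z, t)) x +
      deriv (fun s => U (x, s)) t = 0)
    (hU0 : ∀ x, U (x, 0) = f x) (hU1 : ∀ x, derivWithin (fun s => U (x, s)) (Ici 0) 0 = g x) :
    IsDampedWave U f g where
  contDiffOn := hreg
  eqn x t ht := by
    have hderiv {V : EuclideanSpace ℝ (Fin n) × ℝ → ℝ} {s : ℝ} (hs : 0 < s) :
        timeDeriv V (x, s) = deriv (fun r => V (x, r)) s :=
      derivWithin_of_mem_nhds (Ici_mem_nhds hs)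
    have hsecond : deriv (fun s => timeDeriv U (x, s)) t = deriv (deriv fun s => U (x, s)) t :=
      EventuallyEq.deriv_eq ((eventually_gt_nhds ht).mono fun s hs => hderiv hs)
    rw [hderiv ht, hderiv ht, hsecond, laplacian_eq_lap (contDiff_slice hreg ht.le)]
    exact hpde x t ht
  init := hU0
  deriv_init := hU1

/-- Theorem `movement` (2). There are `C > 0` and `T > 0` such that for
all `t ≥ T` and every time-delayed hot spot `x ∈ ℋ(t)`, `|x − m_h| ≤ C/t`,
where `h = f + g`; i.e. `sup{|x − m_h| : x ∈ ℋ(t)} = O(1/t)` as `t → ∞`. -/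
theorem hot_spots_converge_to_centroid (n : ℕ) (hn : 1 ≤ n)
    (f g : EuclideanSpace ℝ (Fin n) → ℝ)
    (hf : ContDiff ℝ (⊤ : ℕ∞) f) (hg : ContDiff ℝ (⊤ : ℕ∞) g)
    (hfc : HasCompactSupport f) (hgc : HasCompactSupport g)
    (hne : f + g ≠ 0) (hpos : ∀ x, 0 ≤ f x + g x)
    (u : EuclideanSpace ℝ (Fin n) → ℝ → ℝ)
    (hreg : ContDiffOn ℝ 2 (fun p : EuclideanSpace ℝ (Fin n) × ℝ => u p.1 p.2) (univ ×ˢ Ici 0))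
    (hpde : ∀ x, ∀ t > (0 : ℝ),
      deriv (deriv (fun s => u x s)) t - lap (fun z => u z t) x
        + deriv (fun s => u x s) t = 0)
    (hu0 : ∀ x, u x 0 = f x)
    (hu1 : ∀ x, derivWithin (fun s => u x s) (Ici 0) 0 = g x) :
    ∃ C > (0 : ℝ), ∃ T > (0 : ℝ), ∀ t ≥ T,
      ∀ x : EuclideanSpace ℝ (Fin n), (∀ ξ, u ξ t ≤ u x t) →
        ‖x - centroid (f + g)‖ ≤ C / t := by
  obtain ⟨x, hx⟩ := Function.ne_iff.1 hne
  have hmass : 0 < ∫ x, (f x + g x) :=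
    (hf.continuous.add hg.continuous).integral_pos_of_hasCompactSupport_nonneg_nonzero
      (hfc.add hgc) hpos hx
  exact hot_spots_converge_to_centroid_general (isDampedWave_of_forall_deriv hreg hpde hu0 hu1)
    hf hfc hg hgc hmass
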